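/- Let Γ be a finite connected simple graph with at least one edge, and let n, p, q be natural numbers with p + 2q ≤ n. Suppose Γ contains cycle subgraphs C₁, …, C_p and vertices v₁, …, v_q of degree at least 3 such that the cycles are pairwise vertex-disjoint, the vertices v₁, …, v_q are pairwise distinct, and no v_j is a vertex of any C_i. Then the graph n-braid group B_n(Γ) contains a subgroup isomorphic to ℤ^(p+q). -/

import Mathlib

/-!
Distribute the `n` particles into independent blocks: at least one particle on each cycle `C_i`,
two particles near each vertex `v_j`, and any surplus on the first cycle (or, if there are no
cycles, at rest in the middle of an edge). Each block has a closed motion of its own: the particles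
on a cycle rotate once around it, and the two particles near `v_j` exchange their positions by
means of three edges at `v_j`. The blocks move in disjoint regions of `|Γ|`, so these motions form a
torus in `UC_n(|Γ|)`, and the resulting `p + q` loops commute (`Motion.loop_commute`).

That they are independent is shown by a detector for each block: a continuous map from
`UC_n(|Γ|)` to another space which is constant along the loops of the other blocks, and
sends the loop of its own block to an element of infinite order
(`exists_free_abelian_of_detectors`).

* For a cycle the target is the circle. The detector (`edgeWinding`) is the product over all
  particles of the map `|Γ| → S¹` that wraps one edge of the cycle around the circle and collapses
  the rest of the graph. The rotation of `m` particles has winding number `m`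
  (`CycleWalk.det_infinite_order`).
* For a vertex `v` of degree at least three the target is modelled on a theta graph. The detector
  (`starMap`) records the distance to `v` of the closest particle relative to that of the second
  closest one, together with the edge on which the closest particle lies, the edges being divided
  into three classes. The exchange of two particles becomes the commutator of two free generators
  of the fundamental group of the theta graph. It has winding number zero under every map to the
  circle, but its lift to a suitable infinite cyclic cover has winding number `±1` under a map from
  the cover to the circle (`Theta.commutator_infinite_order`, `Star.det_infinite_order`).

Finally, `UC_n(|Γ|)` is path-connected (`uconf_joined`, `realization_pathConnected`), which allows an
arbitrary basepoint.
-/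

open scoped Classical

noncomputable section

namespace GraphBraid

/-- The standard basis vector `e_v` in `ℝ^V`. -/
def basisVec {V : Type} [DecidableEq V] (v : V) : V → ℝ := fun w => if w = v then 1 else 0

/-- The geometric realization of a simple graph, as the subspace of `ℝ^V` given by the
union over the edges of the straight segments joining the corresponding basis vectors. -/
def realization {V : Type} [DecidableEq V] (G : SimpleGraph V) : Set (V → ℝ) :=
  ⋃ (u : V) (v : V) (_ : G.Adj u v), segment ℝ (basisVec u) (basisVec v)

/-- The realization of a subgraph, as a subspace of `ℝ^V`. -/
def subRealization {V : Type} [DecidableEq V] {G : SimpleGraph V} (H : G.Subgraph) :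
    Set (V → ℝ) :=
  ⋃ (u : V) (v : V) (_ : H.Adj u v), segment ℝ (basisVec u) (basisVec v)

/-- The ordered `n`-point configuration space of a topological space. -/
abbrev Conf (n : ℕ) (X : Type) [TopologicalSpace X] : Type :=
  {f : Fin n → X // Function.Injective f}

/-- Two ordered configurations are related when they differ by a permutation of coordinates. -/
def permRel (n : ℕ) (X : Type) [TopologicalSpace X] (f g : Conf n X) : Prop :=
  ∃ σ : Equiv.Perm (Fin n), (f : Fin n → X) = (g : Fin n → X) ∘ σ

/-- The unordered `n`-point configuration space: the quotient of the ordered configuration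
space by the symmetric group permuting coordinates. -/
abbrev UConf (n : ℕ) (X : Type) [TopologicalSpace X] : Type :=
  Quot (permRel n X)

/-- A group is free when it is isomorphic to `FreeGroup S` for some set `S`. -/
def IsFreeGroupType (G : Type*) [Group G] : Prop :=
  ∃ S : Type, Nonempty (G ≃* FreeGroup S)

/-- A cycle subgraph: a subgraph with at least one edge which is connected and all of whose
vertices have degree exactly two (inside the subgraph). -/
def IsCycleSubgraph {W : Type*} {G : SimpleGraph W} (H : G.Subgraph) : Prop :=
  H.edgeSet.Nonempty ∧ H.Connected ∧ ∀ v ∈ H.verts, (H.neighborSet v).ncard = 2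

open scoped unitInterval
open Real (pi)

/-! ### Detecting free abelian subgroups and elements of infinite order -/

/-- Pairwise commuting elements `a i` span a free abelian subgroup on the index set as soon as
each `i` has a *detector*: a homomorphism that kills every other `a j` and sends `a i` to an
element of infinite order. -/
theorem exists_free_abelian_of_detectors {G : Type*} [Group G] {ι : Type} [Fintype ι]
    (a : ι → G) (hcomm : ∀ i j, i ≠ j → Commute (a i) (a j))
    (hdet : ∀ i, ∃ (K : Type) (_ : Group K) (D : G →* K),
      (∀ j, j ≠ i → D (a j) = 1) ∧ ∀ k : ℤ, D (a i) ^ k = 1 → k = 0) :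
    ∃ H : Subgroup G, Nonempty (H ≃* Multiplicative (ι → ℤ)) := by
  classical
  have hc : Pairwise fun i j => ∀ x y : Multiplicative ℤ,
      Commute (zpowersHom G (a i) x) (zpowersHom G (a j) y) := by
    intro i j hij x y
    simp only [zpowersHom_apply]
    exact (hcomm i j hij).zpow_zpow _ _
  let F : (ι → Multiplicative ℤ) →* G :=
    MonoidHom.noncommPiCoprod (fun i => zpowersHom G (a i)) hc
  have hF : Function.Injective F := by
    rw [injective_iff_map_eq_one]
    intro x hx
    funext i
    obtain ⟨K, _, D, hD, hD'⟩ := hdet i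
    have key : D.comp F = (zpowersHom K (D (a i))).comp
        (Pi.evalMonoidHom (fun _ : ι => Multiplicative ℤ) i) := by
      refine MonoidHom.pi_ext fun j y => ?_
      simp only [F, MonoidHom.comp_apply, MonoidHom.noncommPiCoprod_mulSingle, zpowersHom_apply,
        map_zpow, Pi.evalMonoidHom_apply]
      by_cases hji : j = i
      · subst hji; simp
      · rw [hD j hji, Pi.mulSingle_eq_of_ne (Ne.symm hji)]; simp
    have h1 := DFunLike.congr_fun key x
    simp only [MonoidHom.comp_apply, hx, map_one, zpowersHom_apply, Pi.evalMonoidHom_apply] at h1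
    exact Multiplicative.toAdd.injective (hD' _ h1.symm)
  let e : Multiplicative (ι → ℤ) ≃* (ι → Multiplicative ℤ) :=
    { toFun := fun x i => Multiplicative.ofAdd (Multiplicative.toAdd x i)
      invFun := fun x => Multiplicative.ofAdd fun i => Multiplicative.toAdd (x i)
      left_inv := fun _ => rfl
      right_inv := fun _ => rfl
      map_mul' := fun _ _ => rfl }
  exact ⟨F.range, ⟨(MonoidHom.ofInjective hF).symm.trans e.symm⟩⟩

/-- The class of a loop in the fundamental group. -/
def loopClass {X : Type*} [TopologicalSpace X] {x : X} (γ : Path x x) : FundamentalGroup X x :=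
  FundamentalGroup.fromPath (Path.Homotopic.Quotient.mk γ)

theorem map_loopClass {X Y : Type*} [TopologicalSpace X] [TopologicalSpace Y] (f : C(X, Y))
    {x : X} (γ : Path x x) :
    FundamentalGroup.map f x (loopClass γ) = loopClass (γ.map f.continuous) := by
  rfl

/-- A loop `γ` has infinite order if some circle-valued map `f` has nonzero winding number along
it, i.e. `f ∘ γ` has a real logarithm `h` whose endpoints differ. The monodromy of the covering
`exp : ℝ → S¹` along `f ∘ γ` is the translation by `h 1 - h 0`. -/
theorem circle_detects {Y : Type*} [TopologicalSpace Y] {y : Y} (γ : Path y y) (f : C(Y, Circle))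
    (h : C(I, ℝ)) (hh : ∀ t, Circle.exp (h t) = f (γ t)) (hne : h 1 ≠ h 0) (k : ℤ)
    (hk : loopClass γ ^ k = 1) : k = 0 := by
  set cov := Circle.isCoveringMap_exp
  set g := cov.monodromyPerm (f y) (FundamentalGroup.map f y (loopClass γ)) with hg
  have hstep : ∀ e : Circle.exp ⁻¹' {f y}, (g e : ℝ) = e + (h 1 - h 0) := by
    intro e
    have he : Circle.exp e.1 = f y := e.2
    have h0 : Circle.exp (h 0) = f y := by rw [hh]; simp
    have h1 : Circle.exp (h 1) = f y := by rw [hh]; simp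
    have e1 : Circle.exp (e.1 + (h 1 - h 0)) = f y := by
      simp [Circle.exp_add, Circle.exp_sub, he, h0, h1]
    let Λ : Path e.1 (e.1 + (h 1 - h 0)) :=
      ⟨⟨fun t => e.1 + (h t - h 0), by fun_prop⟩, by simp, by simp⟩
    have := cov.monodromy_eq_of_map_eq (γ := FundamentalGroup.map f y (loopClass γ))
      (ex := e) (ey := ⟨_, e1⟩) (Path.Homotopic.Quotient.mk Λ) (by
        rw [map_loopClass]
        refine congr_arg Path.Homotopic.Quotient.mk ?_
        ext1
        funext t
        refine Eq.trans ?_ (rfl : f (γ t) = _)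
        simp [Λ, Circle.exp_add, Circle.exp_sub, he, h0, hh])
    exact congr_arg Subtype.val this
  have hpow : ∀ (m : ℕ) (e : Circle.exp ⁻¹' {f y}), ((g ^ m) e : ℝ) = e + m * (h 1 - h 0) := by
    intro m
    induction m with
    | zero => simp
    | succ m ih => intro e; rw [pow_succ', Equiv.Perm.mul_apply, hstep, ih]; push_cast; ring
  let e0 : Circle.exp ⁻¹' {f y} := ⟨h 0, by simp [hh]⟩
  have hgk : g ^ k = 1 := by rw [hg, ← map_zpow, ← map_zpow, hk, map_one, map_one]
  have hgn : g ^ k.natAbs = 1 := by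
    rcases Int.natAbs_eq k with h' | h'
    · rw [h'] at hgk; simpa using hgk
    · rw [h'] at hgk; simpa using hgk
  have := hpow k.natAbs e0
  rw [hgn] at this
  have h2 : (k.natAbs : ℝ) * (h 1 - h 0) = 0 := by simpa using this
  rcases mul_eq_zero.mp h2 with h3 | h3
  · simpa using h3
  · exact absurd (sub_eq_zero.mp h3) hne

/-- A second-order version of `circle_detects`: when `φ ∘ γ` has winding number zero, `γ` lifts to
a loop in the infinite cyclic cover `{(y, s) | exp s = φ y}` of `Y`, and it has infinite order if
some circle-valued map `ρ` on that cover has nonzero winding number along the lift. This suffices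
because the projection of the cover is injective on fundamental groups. -/
theorem circle_pullback_detects {Y : Type*} [TopologicalSpace Y] {y : Y} (γ : Path y y)
    (φ : C(Y, Circle)) (l : C(I, ℝ)) (hl : ∀ t, Circle.exp (l t) = φ (γ t)) (hl01 : l 1 = l 0)
    (ρ : C({z : Y × ℝ // Circle.exp z.2 = φ z.1}, Circle))
    (h : C(I, ℝ)) (hh : ∀ t, Circle.exp (h t) = ρ ⟨(γ t, l t), hl t⟩) (hne : h 1 ≠ h 0) (k : ℤ)
    (hk : loopClass γ ^ k = 1) : k = 0 := by
  let E := {z : Y × ℝ // Circle.exp z.2 = φ z.1}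
  let pr : C(E, Y) := ⟨fun z => z.1.1, by fun_prop⟩
  let e : E := ⟨(y, l 0), by simp [hl]⟩
  let γ' : Path e e := ⟨⟨fun t => ⟨(γ t, l t), hl t⟩, by fun_prop⟩, by simp [e], by simp [e, hl01]⟩
  have inj : Function.Injective (FundamentalGroup.map pr e) := by
    intro a b hab
    induction a using Path.Homotopic.Quotient.ind with | _ a
    induction b using Path.Homotopic.Quotient.ind with | _ b
    have hab' : (a.map pr.continuous).Homotopic (b.map pr.continuous) :=
      Path.Homotopic.Quotient.exact hab
    refine Path.Homotopic.Quotient.eq.mpr ?_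
    obtain ⟨H⟩ := hab'
    -- lift the second coordinate of the homotopy through the exponential covering
    let la : C(I, ℝ) := ⟨fun t => (a t).1.2,
      (continuous_snd.comp continuous_subtype_val).comp a.continuous⟩
    let lb : C(I, ℝ) := ⟨fun t => (b t).1.2,
      (continuous_snd.comp continuous_subtype_val).comp b.continuous⟩
    let F := H.compContinuousMap φ
    have hFa : ∀ t, F (0, t) = Circle.exp (la t) := by
      intro t
      have : H (0, t) = (a t).1.1 := H.apply_zero t
      change φ (H (0, t)) = _
      rw [this]; exact (a t).2.symm
    let K := Circle.isCoveringMap_exp.liftHomotopyRel (f₀' := la) (f₁' := lb) F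
      ⟨0, by simp, by simp [la, lb]⟩ (by ext1 t; exact (a t).2) (by ext1 t; exact (b t).2)
    have hK : ∀ z, Circle.exp (K z) = φ (H z) := fun z =>
      congr_fun (Circle.isCoveringMap_exp.liftHomotopy_lifts F.toContinuousMap la hFa) z
    exact ⟨{ toFun := fun z => ⟨(H z, K z), hK z⟩
             continuous_toFun := by fun_prop
             map_zero_left := fun t => Subtype.ext (Prod.ext (H.apply_zero t) (K.apply_zero t))
             map_one_left := fun t => Subtype.ext (Prod.ext (H.apply_one t) (K.apply_one t))
             prop' := fun t x hx =>
               Subtype.ext (Prod.ext (H.prop' t x hx) (K.prop' t x hx)) }⟩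
  refine circle_detects γ' ρ h hh hne k (inj ?_)
  rw [map_zpow, map_loopClass]
  have : γ'.map pr.continuous = γ := by ext t; rfl
  rw [map_one]
  exact (congr_arg (fun c => loopClass c ^ k) this).trans hk

/-! ### The theta graph -/

theorem continuous_of_closed_cover {X Y : Type*} [TopologicalSpace X] [TopologicalSpace Y]
    {A B : Set X} (hA : IsClosed A) (hB : IsClosed B) (hAB : ∀ x, x ∈ A ∨ x ∈ B)
    {f g₁ g₂ : X → Y} (h₁ : Continuous g₁) (h₂ : Continuous g₂)
    (e₁ : ∀ x ∈ A, f x = g₁ x) (e₂ : ∀ x ∈ B, f x = g₂ x) : Continuous f := by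
  have hU : A ∪ B = Set.univ := Set.eq_univ_of_forall hAB
  rw [← continuousOn_univ, ← hU]
  exact (h₁.continuousOn.congr e₁).union_of_isClosed (h₂.continuousOn.congr e₂) hA hB

/-- A space modelled on the theta graph (two nodes joined by three arcs). A point is a height
`z.1 ∈ [0, 1]` together with three leg coordinates, at most one of which is nonzero; where all of
them vanish the height must be `0` or `1`. The nodes are the two points with zero leg coordinates,
and the `i`-th arc consists of the points at which only the `i`-th leg coordinate may be nonzero. The
sizes and signs of the leg coordinates play no role: they only record which arc a point is on, in a
way that makes maps into the space easy to write down. Forgetting them maps the space onto the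
theta graph, and this is the map that matters; the space itself is larger. -/
def Theta : Type :=
  {z : ℝ × ℝ × ℝ × ℝ // 0 ≤ z.1 ∧ z.1 ≤ 1 ∧ z.2.1 * z.2.2.1 = 0 ∧ z.2.1 * z.2.2.2 = 0 ∧
    z.2.2.1 * z.2.2.2 = 0 ∧
    (z.2.1 = 0 → z.2.2.1 = 0 → z.2.2.2 = 0 → z.1 = 0 ∨ z.1 = 1)}

instance : TopologicalSpace Theta := inferInstanceAs (TopologicalSpace (Subtype _))

namespace Theta

/-- The height above the lower node, between `0` and `1`. -/
def ht (z : Theta) : ℝ := z.1.1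
/-- The first leg coordinate, nonzero only on the first arc. -/
def leg₁ (z : Theta) : ℝ := z.1.2.1
/-- The second leg coordinate, nonzero only on the second arc. -/
def leg₂ (z : Theta) : ℝ := z.1.2.2.1
/-- The third leg coordinate, nonzero only on the third arc. -/
def leg₃ (z : Theta) : ℝ := z.1.2.2.2

@[fun_prop] theorem continuous_ht : Continuous ht := continuous_subtype_val.fst
@[fun_prop] theorem continuous_leg₁ : Continuous leg₁ := continuous_subtype_val.snd.fst
@[fun_prop] theorem continuous_leg₂ : Continuous leg₂ := continuous_subtype_val.snd.snd.fst
@[fun_prop] theorem continuous_leg₃ : Continuous leg₃ := continuous_subtype_val.snd.snd.snd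

theorem exp_eq_of_sub {x y : ℝ} (m : ℤ) (h : x = y + m * (2 * pi)) :
    Circle.exp x = Circle.exp y := Circle.exp_eq_exp.mpr ⟨m, h⟩

/-- The circle-valued map that runs from `1` to `-1` with the height, along the upper half circle on
the second arc and along the lower half circle on the other two. -/
def angle (z : Theta) : Circle :=
  if z.leg₂ = 0 then Circle.exp (-(pi * z.ht)) else Circle.exp (pi * z.ht)

theorem angle_of_legs (z : Theta) (h1 : z.leg₁ = 0) (h3 : z.leg₃ = 0) :
    z.angle = Circle.exp (pi * z.ht) := by
  unfold angle
  split_ifs with h2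
  · rcases z.2.2.2.2.2.2 h1 h2 h3 with h | h
    · have : z.ht = 0 := h
      simp [this]
    · have : z.ht = 1 := h
      exact exp_eq_of_sub (-1) (by rw [this]; push_cast; ring)
  · rfl

theorem continuous_angle : Continuous angle := by
  refine continuous_of_closed_cover (A := {z : Theta | z.leg₂ = 0})
    (B := {z : Theta | z.leg₁ = 0 ∧ z.leg₃ = 0})
    (isClosed_eq continuous_leg₂ continuous_const)
    ((isClosed_eq continuous_leg₁ continuous_const).inter
      (isClosed_eq continuous_leg₃ continuous_const))
    (fun z => ?_) (g₁ := fun z => Circle.exp (-(pi * z.ht)))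
    (g₂ := fun z => Circle.exp (pi * z.ht)) (by fun_prop) (by fun_prop)
    (fun z hz => if_pos hz) (fun z hz => angle_of_legs z hz.1 hz.2)
  by_cases h : z.leg₂ = 0
  · exact Or.inl h
  · exact Or.inr ⟨(mul_eq_zero.mp z.2.2.2.1).resolve_right h,
      (mul_eq_zero.mp z.2.2.2.2.2.1).resolve_left h⟩

/-- Truncation of a real number to `[-π, 0]`. -/
def clamp (y : ℝ) : ℝ := max (-pi) (min y 0)

/-- The infinite cyclic cover of `Theta` on which `angle` has a real logarithm. -/
abbrev Cover : Type := {z : Theta × ℝ // Circle.exp z.2 = angle z.1}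

/-- The circle-valued map on `Cover` with value `exp s` on the lifts of the third arc with
`-π ≤ s ≤ 0` and `exp (-s)` on the lift of the first arc over the same interval, and constant `1`
or `-1` elsewhere. It winds once around a single one of the lifts of the loop formed by the first
and the third arcs. -/
def coverAngle (z : Cover) : Circle :=
  if z.1.1.leg₁ = 0 then Circle.exp (clamp z.1.2) else Circle.exp (-clamp z.1.2)

theorem coverAngle_of_leg₃ (z : Cover) (h3 : z.1.1.leg₃ = 0) :
    coverAngle z = Circle.exp (-clamp z.1.2) := by
  unfold coverAngle
  split_ifs with h1
  · have h := z.2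
    rw [angle_of_legs _ h1 h3, Circle.exp_eq_exp] at h
    obtain ⟨m, hm⟩ := h
    have h0 : 0 ≤ z.1.1.ht := z.1.1.2.1
    have h1 : z.1.1.ht ≤ 1 := z.1.1.2.2.1
    have hpi := Real.pi_pos
    rcases le_or_gt 0 m with hm0 | hm0
    · have : (0 : ℝ) ≤ m := by exact_mod_cast hm0
      have hy : 0 ≤ z.1.2 := by rw [hm]; positivity
      have : clamp z.1.2 = 0 := by
        unfold clamp; rw [min_eq_right hy, max_eq_right (by linarith)]
      simp [this]
    · have : (m : ℝ) ≤ -1 := by exact_mod_cast Int.le_sub_one_of_lt hm0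
      have hy : z.1.2 ≤ -pi := by rw [hm]; nlinarith
      have : clamp z.1.2 = -pi := by
        unfold clamp; rw [min_eq_left (by linarith), max_eq_left hy]
      rw [this]
      exact exp_eq_of_sub (-1) (by push_cast; ring)
  · rfl

theorem continuous_coverAngle : Continuous coverAngle := by
  have hc : Continuous clamp := by unfold clamp; fun_prop
  refine continuous_of_closed_cover (A := {z : Cover | z.1.1.leg₁ = 0})
    (B := {z | z.1.1.leg₃ = 0})
    (isClosed_eq (continuous_leg₁.comp continuous_subtype_val.fst) continuous_const)
    (isClosed_eq (continuous_leg₃.comp continuous_subtype_val.fst) continuous_const)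
    (fun z => mul_eq_zero.mp z.1.1.2.2.2.2.1) (g₁ := fun z => Circle.exp (clamp z.1.2))
    (g₂ := fun z => Circle.exp (-clamp z.1.2)) (by fun_prop) (by fun_prop)
    (fun z hz => if_pos hz) (fun z hz => coverAngle_of_leg₃ z hz)

/-- A loop based at the upper node that runs down arc 1, up arc 3, down arc 2, up arc 1, down arc
3 and up arc 2 has infinite order. With `aᵢ` the upward path along arc `i`, it is the commutator of
the free generators `a₁⁻¹a₃` and `a₂⁻¹a₃`. Its winding number under `angle` vanishes, and its lift to
`Cover` winds once under `coverAngle`. -/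
theorem commutator_infinite_order {z : Theta} (γ : Path z z)
    (h1 : ∀ t : I, 6 * (t : ℝ) ≤ 1 →
      (γ t).ht = 1 - 6 * t ∧ (γ t).leg₂ = 0 ∧ (γ t).leg₃ = 0)
    (h2 : ∀ t : I, 1 ≤ 6 * (t : ℝ) → 6 * (t : ℝ) ≤ 2 →
      (γ t).ht = 6 * t - 1 ∧ (γ t).leg₁ = 0 ∧ (γ t).leg₂ = 0)
    (h3 : ∀ t : I, 2 ≤ 6 * (t : ℝ) → 6 * (t : ℝ) ≤ 3 →
      (γ t).ht = 3 - 6 * t ∧ (γ t).leg₁ = 0 ∧ (γ t).leg₃ = 0)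
    (h4 : ∀ t : I, 3 ≤ 6 * (t : ℝ) → 6 * (t : ℝ) ≤ 4 →
      (γ t).ht = 6 * t - 3 ∧ (γ t).leg₂ = 0 ∧ (γ t).leg₃ = 0)
    (h5 : ∀ t : I, 4 ≤ 6 * (t : ℝ) → 6 * (t : ℝ) ≤ 5 →
      (γ t).ht = 5 - 6 * t ∧ (γ t).leg₁ = 0 ∧ (γ t).leg₂ = 0)
    (h6 : ∀ t : I, 5 ≤ 6 * (t : ℝ) →
      (γ t).ht = 6 * t - 5 ∧ (γ t).leg₁ = 0 ∧ (γ t).leg₃ = 0)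
    (k : ℤ) (hk : loopClass γ ^ k = 1) : k = 0 := by
  -- `l` is the logarithm of `angle` along `γ`, starting at `-π`; `h` is that of `coverAngle`
  let l : C(I, ℝ) := ⟨fun t => pi * (6 * t + |6 * (t : ℝ) - 4| - |6 * (t : ℝ) - 1| - 4),
    by fun_prop⟩
  let h : C(I, ℝ) := ⟨fun t => pi * max (1 - 6 * (t : ℝ)) (-1), by fun_prop⟩
  have hpi := Real.pi_pos
  have hle : ∀ t : I, 6 * (t : ℝ) ≤ 6 := fun t => by linarith [t.2.2]
  have hge : ∀ t : I, 0 ≤ 6 * (t : ℝ) := fun t => by linarith [t.2.1]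
  have l1 : ∀ t : I, 6 * (t : ℝ) ≤ 1 → l t = pi * (6 * t - 1) := fun t ht => by
    simp only [l, ContinuousMap.coe_mk]
    rw [abs_of_nonpos (by linarith), abs_of_nonpos (by linarith)]; ring
  have l2 : ∀ t : I, 1 ≤ 6 * (t : ℝ) → 6 * (t : ℝ) ≤ 4 → l t = pi * (1 - 6 * t) :=
      fun t ht ht' => by
    simp only [l, ContinuousMap.coe_mk]
    rw [abs_of_nonpos (by linarith), abs_of_nonneg (by linarith)]; ring
  have l3 : ∀ t : I, 4 ≤ 6 * (t : ℝ) → l t = pi * (6 * t - 7) := fun t ht => by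
    simp only [l, ContinuousMap.coe_mk]
    rw [abs_of_nonneg (by linarith), abs_of_nonneg (by linarith)]; ring
  have hl : ∀ t, Circle.exp (l t) = angle (γ t) := by
    intro t
    rcases le_total (6 * (t : ℝ)) 1 with a1 | a1
    · obtain ⟨e, e2, e3⟩ := h1 t a1
      rw [angle, if_pos e2, e, l1 t a1]
      congr 1; ring
    rcases le_total (6 * (t : ℝ)) 2 with a2 | a2
    · obtain ⟨e, e1, e2⟩ := h2 t a1 a2
      rw [angle, if_pos e2, e, l2 t a1 (by linarith)]
      congr 1; ring
    rcases le_total (6 * (t : ℝ)) 3 with a3 | a3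
    · obtain ⟨e, e1, e2⟩ := h3 t a2 a3
      rw [angle_of_legs _ e1 e2, e, l2 t a1 (by linarith)]
      exact exp_eq_of_sub (-1) (by push_cast; ring)
    rcases le_total (6 * (t : ℝ)) 4 with a4 | a4
    · obtain ⟨e, e2, e3⟩ := h4 t a3 a4
      rw [angle, if_pos e2, e, l2 t a1 (by linarith)]
      exact exp_eq_of_sub (-1) (by push_cast; ring)
    rcases le_total (6 * (t : ℝ)) 5 with a5 | a5
    · obtain ⟨e, e1, e2⟩ := h5 t a4 a5
      rw [angle, if_pos e2, e, l3 t a4]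
      exact exp_eq_of_sub (-1) (by push_cast; ring)
    · obtain ⟨e, e1, e2⟩ := h6 t a5
      rw [angle_of_legs _ e1 e2, e, l3 t a4]
      exact exp_eq_of_sub (-1) (by push_cast; ring)
  refine circle_pullback_detects γ ⟨angle, continuous_angle⟩ l hl ?_
    ⟨coverAngle, continuous_coverAngle⟩ h ?_ ?_ k hk
  · simp only [l, ContinuousMap.coe_mk]; norm_num
  · intro t
    change Circle.exp (h t) = coverAngle ⟨(γ t, l t), hl t⟩
    rcases le_total (6 * (t : ℝ)) 1 with a1 | a1
    · rw [coverAngle_of_leg₃ _ (h1 t a1).2.2]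
      simp only [h, ContinuousMap.coe_mk, l1 t a1, clamp]
      have := hge t
      rw [max_eq_left (by linarith), min_eq_left (by nlinarith), max_eq_right (by nlinarith)]
      congr 1; ring
    rcases le_total (6 * (t : ℝ)) 2 with a2 | a2
    · rw [coverAngle, if_pos (h2 t a1 a2).2.1]
      simp only [h, ContinuousMap.coe_mk, l2 t a1 (by linarith), clamp]
      rw [max_eq_left (by linarith), min_eq_left (by nlinarith), max_eq_right (by nlinarith)]
    · have hc : clamp (l t) = -pi := by
        have : l t ≤ -pi := by
          rcases le_total (6 * (t : ℝ)) 4 with a4 | a4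
          · rw [l2 t a1 a4]; nlinarith
          · rw [l3 t a4]; nlinarith [hle t]
        unfold clamp; rw [min_eq_left (by linarith), max_eq_left this]
      have hh : h t = -pi := by
        simp only [h, ContinuousMap.coe_mk]; rw [max_eq_right (by linarith)]; ring
      unfold coverAngle
      split_ifs
      · rw [hh]; exact congr_arg _ hc.symm
      · rw [hh]; change _ = Circle.exp (-clamp (l t)); rw [hc]
        exact exp_eq_of_sub (-1) (by push_cast; ring)
  · simp only [h, ContinuousMap.coe_mk]
    intro hh
    norm_num at hh
    linarith

end Theta

/-! ### Unordered configurations and independent motions -/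

/-- Two loops that form the two pairs of opposite sides of a square commute in the fundamental group. -/
theorem commute_of_square {Y : Type*} [TopologicalSpace Y] {y : Y} (F : C(I × I, Y))
    (α β : Path y y) (hα₀ : ∀ s, F (s, 0) = α s) (hα₁ : ∀ s, F (s, 1) = α s)
    (hβ₀ : ∀ t, F (0, t) = β t) (hβ₁ : ∀ t, F (1, t) = β t) :
    Commute (loopClass α) (loopClass β) := by
  let p₀ : Path ((0 : I), (0 : I)) (1, 0) := ⟨⟨fun s => (s, 0), by fun_prop⟩, rfl, rfl⟩
  let p₁ : Path ((0 : I), (1 : I)) (1, 1) := ⟨⟨fun s => (s, 1), by fun_prop⟩, rfl, rfl⟩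
  let q₀ : Path ((0 : I), (0 : I)) (0, 1) := ⟨⟨fun s => (0, s), by fun_prop⟩, rfl, rfl⟩
  let q₁ : Path ((1 : I), (0 : I)) (1, 1) := ⟨⟨fun s => (1, s), by fun_prop⟩, rfl, rfl⟩
  have hI : ContractibleSpace I := (convex_Icc (0 : ℝ) 1).contractibleSpace ⟨0, by simp⟩
  have hh : (p₀.trans q₁).Homotopic (q₀.trans p₁) := SimplyConnectedSpace.paths_homotopic _ _
  have h2 := hh.map F
  have e00 : F (0, 0) = y := by rw [hα₀, α.source]
  have e11 : F (1, 1) = y := by rw [hα₁, α.target]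
  have key : (α.trans β).Homotopic (β.trans α) := by
    obtain ⟨H⟩ := h2
    have c1 : α.trans β = ((p₀.trans q₁).map F.continuous).cast e00.symm e11.symm := by
      rw [Path.map_trans]
      ext t
      simp only [Path.trans_apply, Path.cast_coe, Path.map_coe, Function.comp]
      split_ifs
      · exact (hα₀ _).symm
      · exact (hβ₁ _).symm
    have c2 : β.trans α = ((q₀.trans p₁).map F.continuous).cast e00.symm e11.symm := by
      rw [Path.map_trans]
      ext t
      simp only [Path.trans_apply, Path.cast_coe, Path.map_coe, Function.comp]
      split_ifs
      · exact (hβ₀ _).symm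
      · exact (hα₁ _).symm
    rw [c1, c2]
    exact ⟨H.cast rfl rfl⟩
  have := Path.Homotopic.Quotient.eq.mpr key
  rw [Path.Homotopic.Quotient.mk_trans, Path.Homotopic.Quotient.mk_trans] at this
  exact this.symm

section UConf

variable {X : Type} [TopologicalSpace X] {n : ℕ} {ι : Type}

/-- The unordered configuration with particles `f i`, indexed by any type in bijection
with `Fin n`. -/
def uconf (e : ι ≃ Fin n) (f : ι → X) (hf : Function.Injective f) : UConf n X :=
  Quot.mk _ ⟨f ∘ e.symm, hf.comp e.symm.injective⟩

theorem uconf_eq_of_range {κ : Type} (e : ι ≃ Fin n) (e' : κ ≃ Fin n) {f : ι → X} {g : κ → X}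
    (hf : Function.Injective f) (hg : Function.Injective g) (h : Set.range f = Set.range g) :
    uconf e f hf = uconf e' g hg := by
  refine Quot.sound ?_
  let τ : ι ≃ κ := (Equiv.ofInjective f hf).trans
    ((Equiv.setCongr h).trans (Equiv.ofInjective g hg).symm)
  have hτ : ∀ i, g (τ i) = f i := fun i => Equiv.apply_ofInjective_symm hg _
  refine ⟨e.symm.trans (τ.trans e'), ?_⟩
  funext i
  simp [hτ]

theorem continuous_uconf {Y : Type*} [TopologicalSpace Y] (e : ι ≃ Fin n) (F : Y → ι → X)
    (hF : ∀ y, Function.Injective (F y)) (hc : Continuous F) :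
    Continuous fun y => uconf e (F y) (hF y) := by
  refine continuous_quot_mk.comp (Continuous.subtype_mk ?_ _)
  exact continuous_pi fun i => (continuous_apply _).comp hc

theorem exists_uconf (x : UConf n X) : ∃ f : Fin n → X, ∃ hf : Function.Injective f,
    x = uconf (Equiv.refl _) f hf := by
  obtain ⟨f, rfl⟩ := Quot.exists_rep x
  exact ⟨f.1, f.2, rfl⟩

end UConf

section Blocks

variable {X : Type} [TopologicalSpace X] {n : ℕ} {B : Type} {m : B → ℕ}

/-- A family of independent closed motions in `X`: the block `b` consists of `m b` labelled
particles, which move for a unit of time without colliding and end up in their initial positions up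
to a permutation, and different blocks stay apart whatever the times at which they are observed. -/
structure Motion (X : Type) [TopologicalSpace X] (B : Type) (m : B → ℕ) where
  /-- The positions of the particles of block `b` at a given time. -/
  traj : (b : B) → I → Fin (m b) → X
  continuous_traj : ∀ b, Continuous (traj b)
  inj : ∀ b t, Function.Injective (traj b t)
  disj : ∀ b b' t t' k k', b ≠ b' → traj b t k ≠ traj b' t' k'
  closed : ∀ b, Set.range (traj b 1) = Set.range (traj b 0)

namespace Motion

variable (M : Motion X B m)

/-- The positions of all the particles when block `b` is observed at time `τ b`. -/
def pos (τ : B → I) (i : Σ b, Fin (m b)) : X := M.traj i.1 (τ i.1) i.2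

theorem pos_injective (τ : B → I) : Function.Injective (M.pos τ) := by
  rintro ⟨b, k⟩ ⟨b', k'⟩ h
  by_cases hb : b = b'
  · subst hb
    have hk : k = k' := M.inj b _ h
    rw [hk]
  · exact absurd h (M.disj _ _ _ _ _ _ hb)

theorem continuous_pos : Continuous M.pos := by
  refine continuous_pi fun i => ?_
  exact (continuous_apply i.2).comp ((M.continuous_traj i.1).comp (continuous_apply i.1))

theorem range_pos (τ : B → I) : Set.range (M.pos τ) = ⋃ b, Set.range (M.traj b (τ b)) := by
  ext x; simp [pos]

/-- The unordered configuration of all the particles when block `b` is observed at time `τ b`. As a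
function of `τ` it factors through the torus `∏ b, I / {0, 1}`, by `torus_eq`. -/
def torus (e : (Σ b, Fin (m b)) ≃ Fin n) (τ : B → I) : UConf n X :=
  uconf e (M.pos τ) (M.pos_injective τ)

theorem continuous_torus (e : (Σ b, Fin (m b)) ≃ Fin n) : Continuous (M.torus e) :=
  continuous_uconf e _ _ M.continuous_pos

theorem torus_eq (e : (Σ b, Fin (m b)) ≃ Fin n) (τ τ' : B → I)
    (h : ∀ b, τ b = τ' b ∨ (τ b = 1 ∧ τ' b = 0)) : M.torus e τ = M.torus e τ' := by
  refine uconf_eq_of_range _ _ _ _ ?_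
  rw [range_pos, range_pos]
  congr 1
  funext b
  rcases h b with h | ⟨h, h'⟩
  · rw [h]
  · rw [h, h', M.closed]

/-- The clock reading in which block `b` is at time `t` and every other block is at rest at
time `0`. -/
def only (b : B) (t : I) : B → I := Function.update 0 b t

theorem only_self (b : B) (t : I) : only b t b = t := Function.update_self ..

theorem only_of_ne {b c : B} (h : c ≠ b) (t : I) : only b t c = 0 := Function.update_of_ne h ..

/-- The loop moving only block `b`. -/
def loop (e : (Σ b, Fin (m b)) ≃ Fin n) (b : B) : Path (M.torus e 0) (M.torus e 0) where
  toFun t := M.torus e (only b t)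
  continuous_toFun := (M.continuous_torus e).comp (continuous_const.update b continuous_id)
  source' := by
    rw [only, show (0 : I) = (0 : B → I) b from rfl, Function.update_eq_self]
  target' := by
    refine M.torus_eq e _ _ fun c => ?_
    by_cases h : c = b
    · subst h; right; simp [only]
    · left; simp [only, h]

theorem loop_apply (e : (Σ b, Fin (m b)) ≃ Fin n) (b : B) (t : I) :
    M.loop e b t = uconf e (M.pos (only b t)) (M.pos_injective _) := rfl

theorem loop_commute (e : (Σ b, Fin (m b)) ≃ Fin n) (b b' : B) (hb : b ≠ b') :
    Commute (loopClass (M.loop e b)) (loopClass (M.loop e b')) := by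
  let F : C(I × I, UConf n X) :=
    ⟨fun z => M.torus e (Function.update (Function.update 0 b z.1) b' z.2),
      (M.continuous_torus e).comp (Continuous.update
        (Continuous.update (f := fun _ => (0 : B → I)) continuous_const b continuous_fst)
        b' continuous_snd)⟩
  refine commute_of_square F _ _ ?_ ?_ ?_ ?_ <;> intro t <;>
    refine M.torus_eq e _ _ fun c => ?_ <;>
    · by_cases h : c = b' <;> by_cases h' : c = b <;>
        simp_all [only, Ne.symm hb]

end Motion

end Blocks

/-! ### Path-connectedness of unordered configuration spaces -/

section PathConnected

variable {X : Type} [TopologicalSpace X] {n : ℕ}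

/-- The unordered configuration with underlying finite set `F`. -/
def ofFinset (F : Finset X) (hF : F.card = n) : UConf n X :=
  uconf (F.equivFinOfCardEq hF) Subtype.val Subtype.val_injective

theorem exists_ofFinset (x : UConf n X) : ∃ (F : Finset X) (hF : F.card = n),
    x = ofFinset F hF := by
  obtain ⟨f, hf, rfl⟩ := exists_uconf x
  refine ⟨Finset.univ.image f, by simp [Finset.card_image_of_injective _ hf], ?_⟩
  exact uconf_eq_of_range _ _ _ _ (by ext; simp)

/-- Moving a single particle from `y` to `w` along a path that avoids the others. -/
theorem joined_of_move (S : Finset X) {y w : X} (hy : y ∉ S)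
    (h : JoinedIn {z | z ∉ S} y w) (h₁ : (insert y S).card = n) (h₂ : (insert w S).card = n) :
    Joined (ofFinset (insert y S) h₁) (ofFinset (insert w S) h₂) := by
  obtain ⟨γ, hγ⟩ := h
  let F : I → Option S → X := fun t o => o.elim (γ t) Subtype.val
  have hinj : ∀ t, Function.Injective (F t) := by
    rintro t (_ | a) (_ | b) hab
    · rfl
    · exact absurd (show γ t ∈ S from (show γ t = b from hab) ▸ b.2) (hγ t)
    · exact absurd (show γ t ∈ S from (show a = γ t from hab) ▸ a.2) (hγ t)
    · exact congrArg some (Subtype.ext hab)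
  have hF : Continuous F := by
    refine continuous_pi fun o => ?_
    rcases o with _ | a
    · exact γ.continuous
    · exact continuous_const
  have hcard : Fintype.card (Option S) = n := by
    rw [Finset.card_insert_of_notMem hy] at h₁
    simp [h₁]
  let e : Option S ≃ Fin n := Fintype.equivFinOfCardEq hcard
  have hr : ∀ t, Set.range (F t) = insert (γ t) (S : Set X) := by
    intro t; ext x; simp [F, Set.range, Option.exists, eq_comm]
  refine ⟨⟨⟨fun t => uconf e (F t) (hinj t), continuous_uconf e F hinj hF⟩, ?_, ?_⟩⟩
  · exact uconf_eq_of_range _ _ (hinj _) _ (by rw [hr]; ext; simp)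
  · exact uconf_eq_of_range _ _ (hinj _) _ (by rw [hr]; ext; simp)

/-- Both configurations are obtained from the `n + 1` points of `A` by leaving a hole. Along a path
from `h₀` to `h₁`, take the last point `γ a ∈ A` whose hole is reachable before the first point
`γ b ∈ A` whose hole is not: the path has no points of `A` in between, so moving a particle from
`γ b` to `γ a` along it gives a contradiction. -/
theorem joined_erase [T1Space X] [PathConnectedSpace X] (A : Finset X) (hA : A.card = n + 1)
    (h₀ h₁ : X) (m₀ : h₀ ∈ A) (m₁ : h₁ ∈ A) :
    Joined (ofFinset (A.erase h₀) (by simp [m₀, hA]) : UConf n X)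
      (ofFinset (A.erase h₁) (by simp [m₁, hA])) := by
  by_contra hcon
  let P : X → Prop := fun h => ∃ m : h ∈ A,
    Joined (ofFinset (A.erase h₀) (by simp [m₀, hA]) : UConf n X)
      (ofFinset (A.erase h) (by simp [m, hA]))
  let A₁ : Set X := {h | h ∈ A ∧ P h}
  let A₂ : Set X := {h | h ∈ A ∧ ¬ P h}
  have c₁ : IsClosed A₁ := (A.finite_toSet.subset fun _ h => h.1).isClosed
  have c₂ : IsClosed A₂ := (A.finite_toSet.subset fun _ h => h.1).isClosed
  have i₀ : h₀ ∈ A₁ := ⟨m₀, m₀, Joined.refl _⟩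
  have i₁ : h₁ ∈ A₂ := ⟨m₁, fun ⟨_, h⟩ => hcon h⟩
  let γ := PathConnectedSpace.somePath h₀ h₁
  obtain ⟨b, hb, hbmin⟩ := ((c₂.preimage γ.continuous).isCompact).exists_isMinOn
    (f := id) ⟨1, by simpa using i₁⟩ continuous_id.continuousOn
  obtain ⟨a, ⟨ha, hab⟩, hamax⟩ :=
    (((c₁.preimage γ.continuous).inter (isClosed_Iic (a := b))).isCompact).exists_isMaxOn
      (f := id) ⟨0, by simpa using i₀, b.2.1⟩ continuous_id.continuousOn
  have hab : a ≤ b := hab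
  have hpa : P (γ a) := ha.2
  have hpb : ¬ P (γ b) := hb.2
  have hne : γ a ≠ γ b := fun h => hpb (h ▸ hpa)
  have hmid : ∀ t ∈ Set.Icc a b, γ t ∉ (A.erase (γ a)).erase (γ b) := by
    rintro t ⟨hat, htb⟩ ht
    simp only [Finset.mem_erase] at ht
    by_cases hP : P (γ t)
    · have : t ≤ a := hamax (a := t) ⟨⟨ht.2.2, hP⟩, htb⟩
      exact ht.2.1 (by rw [le_antisymm this hat])
    · have : b ≤ t := hbmin (a := t) ⟨ht.2.2, hP⟩
      exact ht.1 (by rw [le_antisymm htb this])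
  have hj : JoinedIn {z | z ∉ (A.erase (γ a)).erase (γ b)} (γ b) (γ a) := by
    have hpc : IsPathConnected (γ '' Set.Icc a b) := by
      have hIcc : IsPathConnected (Set.Icc (a : ℝ) b) :=
        (convex_Icc (a : ℝ) b).isPathConnected ⟨a, le_rfl, hab⟩
      have himg := hIcc.image γ.continuous_extend
      convert himg using 1
      ext z
      constructor
      · rintro ⟨t, ht, rfl⟩
        exact ⟨t, ht, γ.extend_apply t.2⟩
      · rintro ⟨t, ht, rfl⟩
        have ht' : t ∈ I := ⟨a.2.1.trans ht.1, ht.2.trans b.2.2⟩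
        exact ⟨⟨t, ht'⟩, ht, (γ.extend_apply ht').symm⟩
    exact (hpc.joinedIn _ ⟨b, ⟨hab, le_rfl⟩, rfl⟩ _ ⟨a, ⟨le_rfl, hab⟩, rfl⟩).mono
      (by rintro _ ⟨t, ht, rfl⟩; exact hmid t ht)
  obtain ⟨ma, hja⟩ := hpa
  apply hpb
  refine ⟨hb.1, hja.trans ?_⟩
  have k1 : insert (γ b) ((A.erase (γ a)).erase (γ b)) = A.erase (γ a) :=
    Finset.insert_erase (Finset.mem_erase.mpr ⟨hne.symm, hb.1⟩)
  have k2 : insert (γ a) ((A.erase (γ a)).erase (γ b)) = A.erase (γ b) := by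
    rw [Finset.erase_right_comm]
    exact Finset.insert_erase (Finset.mem_erase.mpr ⟨hne, ma⟩)
  have := joined_of_move (n := n) ((A.erase (γ a)).erase (γ b)) (y := γ b) (w := γ a)
    (by simp) hj (by rw [k1]; simp [ma, hA])
    (by rw [k2, Finset.card_erase_of_mem hb.1, hA]; rfl)
  simpa only [k1, k2] using this

/-- The particles in `F \ G` are replaced one at a time by points of `G \ F`, using
`joined_erase`; the induction is on the number of particles left to replace. -/
theorem joined_ofFinset [T1Space X] [PathConnectedSpace X] (G : Finset X) (hG : G.card = n) :
    ∀ (k : ℕ) (F : Finset X) (hF : F.card = n), (F \ G).card = k →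
      Joined (ofFinset F hF) (ofFinset G hG) := by
  intro k
  induction k with
  | zero =>
    intro F hF h
    rw [Finset.card_eq_zero, Finset.sdiff_eq_empty_iff_subset] at h
    obtain rfl := Finset.eq_of_subset_of_card_le h (by omega)
    exact Joined.refl _
  | succ k ih =>
    intro F hF h
    obtain ⟨y, hy⟩ : (F \ G).Nonempty := Finset.card_pos.mp (by omega)
    have h' : (G \ F).card = (F \ G).card := by
      have := Finset.card_sdiff_add_card_inter F G
      have := Finset.card_sdiff_add_card_inter G F
      rw [Finset.inter_comm] at this
      omega
    obtain ⟨w, hw⟩ : (G \ F).Nonempty := Finset.card_pos.mp (by omega)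
    rw [Finset.mem_sdiff] at hy hw
    have hA : (insert w F).card = n + 1 := by rw [Finset.card_insert_of_notMem hw.2, hF]
    have := joined_erase (n := n) (insert w F) hA w y (by simp) (by simp [hy.1])
    have e : (insert w F).erase w = F := Finset.erase_insert hw.2
    simp only [e] at this
    refine this.trans (ih _ _ ?_)
    have : (insert w F).erase y \ G = (F \ G).erase y := by
      ext z
      simp only [Finset.mem_sdiff, Finset.mem_erase, Finset.mem_insert]
      constructor
      · rintro ⟨⟨h1, rfl | h2⟩, h3⟩
        · exact absurd hw.1 h3
        · exact ⟨h1, h2, h3⟩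
      · rintro ⟨h1, h2, h3⟩
        exact ⟨⟨h1, Or.inr h2⟩, h3⟩
    rw [this, Finset.card_erase_of_mem (by simp [hy]), h]
    rfl

/-- The unordered configuration spaces of a path-connected `T₁` space are path-connected. -/
theorem uconf_joined [T1Space X] [PathConnectedSpace X] (x y : UConf n X) : Joined x y := by
  obtain ⟨F, hF, rfl⟩ := exists_ofFinset x
  obtain ⟨G, hG, rfl⟩ := exists_ofFinset y
  exact joined_ofFinset G hG _ F hF rfl

end PathConnected

/-! ### The realization of a graph -/

section Realization

variable {V : Type} [DecidableEq V] {Γ : SimpleGraph V}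

/-- The point at parameter `t` on the segment from `e_a` to `e_b`. -/
def edgePt (a b : V) (t : ℝ) : V → ℝ := fun w => (1 - t) * basisVec a w + t * basisVec b w

theorem edgePt_mem {a b : V} (h : Γ.Adj a b) {t : ℝ} (h₀ : 0 ≤ t) (h₁ : t ≤ 1) :
    edgePt a b t ∈ realization Γ := by
  simp only [realization, Set.mem_iUnion]
  exact ⟨a, b, h, 1 - t, t, by linarith, h₀, by ring, rfl⟩

theorem exists_edgePt {x : V → ℝ} (hx : x ∈ realization Γ) :
    ∃ a b, Γ.Adj a b ∧ ∃ t, 0 ≤ t ∧ t ≤ 1 ∧ x = edgePt a b t := by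
  simp only [realization, Set.mem_iUnion] at hx
  obtain ⟨a, b, h, s, t, hs, ht, hst, rfl⟩ := hx
  refine ⟨a, b, h, t, ht, by linarith, ?_⟩
  rw [show s = 1 - t by linarith]
  rfl

theorem coord_nonneg {x : V → ℝ} (hx : x ∈ realization Γ) (w : V) : 0 ≤ x w := by
  obtain ⟨a, b, h, t, h0, h1, rfl⟩ := exists_edgePt hx
  simp only [edgePt, basisVec]
  split_ifs <;> linarith

theorem coord_le_one {x : V → ℝ} (hx : x ∈ realization Γ) (w : V) : x w ≤ 1 := by
  obtain ⟨a, b, h, t, h0, h1, rfl⟩ := exists_edgePt hx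
  simp only [edgePt, basisVec]
  split_ifs <;> linarith

theorem coord_add_eq_one {x : V → ℝ} (hx : x ∈ realization Γ) {u w : V} (huw : u ≠ w)
    (hu : x u ≠ 0) (hw : x w ≠ 0) : x u + x w = 1 := by
  obtain ⟨a, b, h, t, h0, h1, rfl⟩ := exists_edgePt hx
  simp only [edgePt, basisVec] at *
  have := h.ne
  split_ifs at * <;> simp_all

/-- A point with positive `v`-coordinate has at most one other nonzero coordinate. -/
theorem coord_mul_eq_zero {x : V → ℝ} (hx : x ∈ realization Γ) {v u w : V} (hv : x v ≠ 0)
    (huw : u ≠ w) (hu : u ≠ v) (hw : w ≠ v) : x u * x w = 0 := by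
  by_contra hne
  rw [mul_eq_zero, not_or] at hne
  have h1 := coord_add_eq_one hx huw hne.1 hne.2
  have h2 := coord_add_eq_one hx hu hne.1 hv
  have h3 := coord_add_eq_one hx hw hne.2 hv
  obtain ⟨a, b, h, t, h0, h1, rfl⟩ := exists_edgePt hx
  simp only [edgePt, basisVec] at *
  have := h.ne
  split_ifs at * <;> simp_all

theorem eq_basisVec {x : V → ℝ} (hx : x ∈ realization Γ) {v : V} (hv : x v = 1) :
    x = basisVec v := by
  obtain ⟨a, b, h, t, h0, h1, rfl⟩ := exists_edgePt hx
  have := h.ne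
  funext w
  simp only [edgePt, basisVec] at *
  split_ifs at * <;> simp_all

theorem joinedIn_edge {a b : V} (h : Γ.Adj a b) {s t : ℝ} (hs₀ : 0 ≤ s) (hs₁ : s ≤ 1)
    (ht₀ : 0 ≤ t) (ht₁ : t ≤ 1) :
    JoinedIn (realization Γ) (edgePt a b s) (edgePt a b t) := by
  have hc : IsPathConnected (edgePt a b '' Set.Icc 0 1) := by
    refine IsPathConnected.image ((convex_Icc (0 : ℝ) 1).isPathConnected ⟨0, by simp⟩) ?_
    exact continuous_pi fun w => by unfold edgePt; fun_prop
  refine (hc.joinedIn _ ⟨s, ⟨hs₀, hs₁⟩, rfl⟩ _ ⟨t, ⟨ht₀, ht₁⟩, rfl⟩).mono ?_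
  rintro _ ⟨r, hr, rfl⟩
  exact edgePt_mem h hr.1 hr.2

theorem edgePt_zero (a b : V) : edgePt a b 0 = basisVec a := by
  funext w; simp [edgePt]

theorem edgePt_one (a b : V) : edgePt a b 1 = basisVec b := by
  funext w; simp [edgePt]

theorem realization_pathConnected (hconn : Γ.Connected) (hedge : Γ.edgeSet.Nonempty) :
    PathConnectedSpace (realization Γ) := by
  rw [← isPathConnected_iff_pathConnectedSpace]
  obtain ⟨⟨a₀, b₀⟩, hab⟩ := hedge
  have hab : Γ.Adj a₀ b₀ := hab
  have hvert : ∀ b, JoinedIn (realization Γ) (basisVec a₀) (basisVec b) := by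
    intro b
    have := (SimpleGraph.reachable_iff_reflTransGen a₀ b).mp (hconn.preconnected a₀ b)
    induction this with
    | refl =>
      rw [← edgePt_zero a₀ b₀]
      exact joinedIn_edge hab le_rfl zero_le_one le_rfl zero_le_one
    | tail _ h ih =>
      refine ih.trans ?_
      have := joinedIn_edge h le_rfl zero_le_one zero_le_one le_rfl
      rwa [edgePt_zero, edgePt_one] at this
  refine ⟨basisVec a₀, (hvert a₀).source_mem, fun {y} hy => ?_⟩
  obtain ⟨a, b, h, t, h0, h1, rfl⟩ := exists_edgePt hy
  refine (hvert a).trans ?_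
  rw [← edgePt_zero a b]
  exact joinedIn_edge h le_rfl zero_le_one h0 h1

end Realization

/-! ### Detectors on configuration spaces of graphs -/

section CycleDetector

variable {V : Type} [DecidableEq V] {Γ : SimpleGraph V} {n : ℕ}

/-- The map `|Γ| → S¹` that winds once along the edge from `a` to `b` and collapses the
rest of the graph to `1`. -/
def edgeAngle (a b : V) (x : realization Γ) : Circle :=
  if x.1 a * x.1 b = 0 then 1 else Circle.exp (2 * pi * x.1 b)

theorem edgeAngle_of_add {a b : V} (x : realization Γ) (h : x.1 a + x.1 b = 1) :
    edgeAngle a b x = Circle.exp (2 * pi * x.1 b) := by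
  unfold edgeAngle
  split_ifs with h0
  · rcases mul_eq_zero.mp h0 with h1 | h1
    · rw [show x.1 b = 1 by linarith]; simp
    · simp [h1]
  · rfl

theorem continuous_edgeAngle {a b : V} (hab : a ≠ b) :
    Continuous (edgeAngle a b : realization Γ → Circle) := by
  have hc : ∀ w, Continuous fun x : realization Γ => x.1 w := fun w =>
    (continuous_apply w).comp continuous_subtype_val
  refine continuous_of_closed_cover (A := {x : realization Γ | x.1 a * x.1 b = 0})
    (B := {x : realization Γ | x.1 a + x.1 b = 1})
    (isClosed_eq ((hc a).mul (hc b)) continuous_const)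
    (isClosed_eq ((hc a).add (hc b)) continuous_const) (fun x => ?_)
    (g₁ := fun _ => 1) (g₂ := fun x => Circle.exp (2 * pi * x.1 b)) continuous_const
    (Circle.exp.continuous.comp (continuous_const.mul (hc b)))
    (fun x hx => if_pos hx) (fun x hx => edgeAngle_of_add x hx)
  by_cases h : x.1 a * x.1 b = 0
  · exact Or.inl h
  · rw [mul_eq_zero, not_or] at h
    exact Or.inr (coord_add_eq_one x.2 hab h.1 h.2)

/-- The product over all particles of `edgeAngle a b`. -/
def edgeWinding (n : ℕ) (a b : V) (hab : a ≠ b) : C(UConf n (realization Γ), Circle) where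
  toFun := Quot.lift (fun f => ∏ k, edgeAngle a b (f.1 k)) (by
    rintro f g ⟨τ, h⟩
    simp only [h, Function.comp]
    exact Equiv.prod_comp τ fun k => edgeAngle a b (g.1 k))
  continuous_toFun := by
    refine continuous_quot_lift _ ?_
    exact continuous_finsetProd _ fun k _ => (continuous_edgeAngle hab).comp
      ((continuous_apply k).comp continuous_subtype_val)

theorem edgeWinding_uconf {ι : Type} [Fintype ι] (a b : V) (hab : a ≠ b) (e : ι ≃ Fin n)
    (f : ι → realization Γ) (hf : Function.Injective f) :
    edgeWinding n a b hab (uconf e f hf) = ∏ i, edgeAngle a b (f i) :=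
  Equiv.prod_comp e.symm fun i => edgeAngle a b (f i)

end CycleDetector

section StarDetector

variable {V : Type} [DecidableEq V] {Γ : SimpleGraph V} {n : ℕ}

/-- The truncated distance to the vertex `v`: it grows from `0` at `v` to `1` at one third of each
edge at `v`, and equals `1` everywhere else. -/
def rad (v : V) (x : realization Γ) : ℝ := min 1 (3 * (1 - x.1 v))

theorem rad_nonneg (v : V) (x : realization Γ) : 0 ≤ rad v x :=
  le_min zero_le_one (by linarith [coord_le_one x.2 v])

theorem rad_le_one (v : V) (x : realization Γ) : rad v x ≤ 1 := min_le_left _ _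

theorem continuous_coord (w : V) : Continuous fun x : realization Γ => x.1 w :=
  (continuous_apply w).comp continuous_subtype_val

theorem continuous_rad (v : V) : Continuous (rad v : realization Γ → ℝ) :=
  continuous_const.min (continuous_const.mul (continuous_const.sub (continuous_coord v)))

theorem rad_pos_of_ne {v : V} {x y : realization Γ} (h : x ≠ y) :
    0 < max (rad v x) (rad v y) := by
  by_contra hcon
  rw [not_lt] at hcon
  have hx : ∀ z : realization Γ, rad v z ≤ 0 → z.1 v = 1 := by
    intro z hz
    rcases min_le_iff.mp hz with h | h
    · linarith
    · linarith [coord_le_one z.2 v]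
  apply h
  apply Subtype.ext
  rw [eq_basisVec x.2 (hx x ((le_max_left _ _).trans hcon)),
    eq_basisVec y.2 (hx y ((le_max_right _ _).trans hcon))]

/-- The second smallest distance of a particle to `v`, truncated at `1`: the minimum of `1` and of
the numbers `max (rad v (f i)) (rad v (f k))` for `i ≠ k`. The index `none` stands for the value `1`,
which is also given to the diagonal pairs. -/
def second (v : V) (f : Fin n → realization Γ) : ℝ :=
  Finset.univ.inf' Finset.univ_nonempty fun o : Option (Fin n × Fin n) =>
    o.elim 1 fun ik => if ik.1 = ik.2 then 1 else max (rad v (f ik.1)) (rad v (f ik.2))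

theorem second_le_one (v : V) (f : Fin n → realization Γ) : second v f ≤ 1 :=
  Finset.inf'_le _ (Finset.mem_univ (none : Option (Fin n × Fin n)))

theorem second_le (v : V) (f : Fin n → realization Γ) {i k : Fin n} (h : i ≠ k) :
    second v f ≤ max (rad v (f i)) (rad v (f k)) := by
  have := Finset.inf'_le (s := Finset.univ)
    (fun o : Option (Fin n × Fin n) => o.elim (1 : ℝ) fun ik =>
      if ik.1 = ik.2 then 1 else max (rad v (f ik.1)) (rad v (f ik.2)))
    (Finset.mem_univ (some (i, k)))
  simp only [Option.elim, if_neg h] at this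
  exact this

theorem le_second (v : V) (f : Fin n → realization Γ) (c : ℝ) (h1 : c ≤ 1)
    (h : ∀ i k, i ≠ k → c ≤ max (rad v (f i)) (rad v (f k))) : c ≤ second v f := by
  refine Finset.le_inf' _ _ ?_
  rintro (_ | ⟨i, k⟩) -
  · exact h1
  · simp only [Option.elim]
    split_ifs with hik
    · exact h1
    · exact h i k hik

theorem second_pos (v : V) (f : Fin n → realization Γ) (hf : Function.Injective f) :
    0 < second v f := by
  refine (Finset.lt_inf'_iff _).mpr ?_
  rintro (_ | ⟨i, k⟩) -
  · exact one_pos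
  · simp only [Option.elim]
    split_ifs with hik
    · exact one_pos
    · exact rad_pos_of_ne fun h => hik (hf h)

theorem second_comp (v : V) (f : Fin n → realization Γ) (τ : Equiv.Perm (Fin n)) :
    second v (f ∘ τ) = second v f := by
  have key : ∀ (g : Fin n → realization Γ) (τ : Equiv.Perm (Fin n)),
      second v g ≤ second v (g ∘ τ) := fun g τ =>
    le_second _ _ _ (second_le_one _ _) fun i k h => second_le v g (τ.injective.ne h)
  refine le_antisymm ?_ (key f τ)
  have := key (f ∘ τ) τ.symm
  rwa [Function.comp_assoc, Equiv.self_comp_symm, Function.comp_id] at this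

theorem continuous_second (v : V) :
    Continuous (second v : (Fin n → realization Γ) → ℝ) := by
  refine Continuous.finset_inf'_apply _ ?_
  rintro (_ | ⟨i, k⟩) -
  · exact continuous_const
  · simp only [Option.elim]
    split_ifs with hik
    · exact continuous_const
    · exact ((continuous_rad v).comp (continuous_apply i)).max
        ((continuous_rad v).comp (continuous_apply k))

/-- How much closer particle `i` is to `v` than the second closest particle, or `0` if it is not.
At most one particle has a nonzero gap (`gap_eq_zero_of_ne`). -/
def gap (v : V) (f : Fin n → realization Γ) (i : Fin n) : ℝ := max 0 (second v f - rad v (f i))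

theorem gap_comp (v : V) (f : Fin n → realization Γ) (τ : Equiv.Perm (Fin n)) (i : Fin n) :
    gap v (f ∘ τ) i = gap v f (τ i) := by
  simp [gap, second_comp]

theorem continuous_gap (v : V) (i : Fin n) :
    Continuous fun f : Fin n → realization Γ => gap v f i :=
  continuous_const.max ((continuous_second v).sub ((continuous_rad v).comp (continuous_apply i)))

theorem gap_nonneg (v : V) (f : Fin n → realization Γ) (i : Fin n) : 0 ≤ gap v f i :=
  le_max_left _ _

theorem gap_le (v : V) (f : Fin n → realization Γ) (hf : Function.Injective f) (i : Fin n) :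
    gap v f i ≤ second v f :=
  max_le (second_pos v f hf).le (by linarith [rad_nonneg v (f i)])

theorem gap_eq_zero_of_ne (v : V) (f : Fin n → realization Γ) {i k : Fin n} (h : i ≠ k)
    (hi : gap v f i ≠ 0) : gap v f k = 0 := by
  have h1 : rad v (f i) < second v f := by
    by_contra hcon
    exact hi (max_eq_left (by linarith [not_lt.mp hcon]))
  have h2 := second_le v f h
  rcases le_max_iff.mp h2 with h3 | h3
  · linarith
  · exact max_eq_left (by linarith)

/-- The sum over the particles of `φ` weighted by `gap`; only the particle closest to `v`
contributes, so this is a continuous way of evaluating `φ` at that particle. -/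
def gapSum (v : V) (φ : realization Γ → ℝ) (f : Fin n → realization Γ) : ℝ :=
  ∑ i, φ (f i) * gap v f i

theorem gapSum_comp (v : V) (φ : realization Γ → ℝ) (f : Fin n → realization Γ)
    (τ : Equiv.Perm (Fin n)) : gapSum v φ (f ∘ τ) = gapSum v φ f := by
  simp only [gapSum, gap_comp, Function.comp]
  exact Equiv.sum_comp τ fun i => φ (f i) * gap v f i

theorem continuous_gapSum (v : V) {φ : realization Γ → ℝ} (hφ : Continuous φ) :
    Continuous (gapSum v φ : (Fin n → realization Γ) → ℝ) :=
  continuous_finsetSum _ fun i _ => (hφ.comp (continuous_apply i)).mul (continuous_gap v i)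

theorem gapSum_single (v : V) (f : Fin n → realization Γ) {i : Fin n}
    (hi : ∀ k, k ≠ i → gap v f k = 0) (φ : realization Γ → ℝ) :
    gapSum v φ f = φ (f i) * gap v f i :=
  Finset.sum_eq_single i (fun k _ hk => by rw [hi k hk, mul_zero]) (by simp)

/-- The sum of the coordinates of `x` at the vertices other than `v`, `u₁` and `u₂`. On the edges at
`v` it is nonzero only in the interior of those that lead neither to `u₁` nor to `u₂`, and at their
far ends. -/
def rest (v u₁ u₂ : V) (x : realization Γ) : ℝ := 1 - x.1 v - x.1 u₁ - x.1 u₂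

theorem continuous_rest (v u₁ u₂ : V) : Continuous (rest v u₁ u₂ : realization Γ → ℝ) :=
  ((continuous_const.sub (continuous_coord v)).sub (continuous_coord u₁)).sub
    (continuous_coord u₂)

theorem mul_rest {v u₁ u₂ : V} (h₁ : u₁ ≠ v) (h₂ : u₂ ≠ v) (h₁₂ : u₁ ≠ u₂)
    (x : realization Γ) (hv : x.1 v ≠ 0) :
    x.1 u₁ * x.1 u₂ = 0 ∧ x.1 u₁ * rest v u₁ u₂ x = 0 ∧ x.1 u₂ * rest v u₁ u₂ x = 0 := by
  have h := coord_mul_eq_zero x.2 hv h₁₂ h₁ h₂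
  refine ⟨h, ?_, ?_⟩
  · by_contra hcon
    rw [mul_eq_zero, not_or] at hcon
    have h' := coord_add_eq_one x.2 h₁ hcon.1 hv
    have h'' := (mul_eq_zero.mp h).resolve_left hcon.1
    exact hcon.2 (by unfold rest; linarith)
  · by_contra hcon
    rw [mul_eq_zero, not_or] at hcon
    have h' := coord_add_eq_one x.2 h₂ hcon.1 hv
    have h'' := (mul_eq_zero.mp h).resolve_right hcon.1
    exact hcon.2 (by unfold rest; linarith)

/-- The four numbers used in `starMap` satisfy the equations of `Theta`: a particle with nonzero
gap lies near `v`, on a single edge at `v`. -/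
theorem star_mem {v u₁ u₂ : V} (h₁ : u₁ ≠ v) (h₂ : u₂ ≠ v) (h₁₂ : u₁ ≠ u₂)
    (f : Fin n → realization Γ) (hf : Function.Injective f) :
    let s := 1 - gapSum v (fun _ => 1) f / second v f
    let b₁ := gapSum v (fun x => x.1 u₁) f
    let b₂ := gapSum v (fun x => x.1 u₂) f
    let b₃ := gapSum v (rest v u₁ u₂) f
    0 ≤ s ∧ s ≤ 1 ∧ b₁ * b₂ = 0 ∧ b₁ * b₃ = 0 ∧ b₂ * b₃ = 0 ∧
      (b₁ = 0 → b₂ = 0 → b₃ = 0 → s = 0 ∨ s = 1) := by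
  intro s b₁ b₂ b₃
  have hpos := second_pos v f hf
  by_cases hz : ∀ i, gap v f i = 0
  · have h0 : ∀ φ, gapSum v φ f = 0 := fun φ => Finset.sum_eq_zero fun i _ => by
      rw [hz i, mul_zero]
    simp [s, b₁, b₂, b₃, h0]
  · push Not at hz
    obtain ⟨i, hi⟩ := hz
    have hs := gapSum_single v f (i := i) fun k hk => gap_eq_zero_of_ne v f hk.symm hi
    have hg : gap v f i = second v f - rad v (f i) := by
      rcases max_choice 0 (second v f - rad v (f i)) with h | h
      · exact absurd h hi
      · exact h
    have hlt : rad v (f i) < second v f := by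
      have := lt_of_le_of_ne (gap_nonneg v f i) hi.symm
      linarith
    have hr : rad v (f i) = 3 * (1 - (f i).1 v) := by
      rcases min_choice 1 (3 * (1 - (f i).1 v)) with h | h
      · have : rad v (f i) = 1 := h
        linarith [second_le_one v f]
      · exact h
    have hv : (f i).1 v ≠ 0 := by
      intro h0
      rw [h0] at hr
      linarith [second_le_one v f]
    obtain ⟨p1, p2, p3⟩ := mul_rest h₁ h₂ h₁₂ (f i) hv
    have e₁ : b₁ = (f i).1 u₁ * gap v f i := hs _
    have e₂ : b₂ = (f i).1 u₂ * gap v f i := hs _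
    have e₃ : b₃ = rest v u₁ u₂ (f i) * gap v f i := hs _
    have es : s = 1 - gap v f i / second v f := by
      simp only [s]; rw [hs, one_mul]
    refine ⟨?_, ?_, ?_, ?_, ?_, ?_⟩
    · rw [es, sub_nonneg, div_le_one hpos]
      exact gap_le v f hf i
    · rw [es]
      have := div_nonneg (gap_nonneg v f i) hpos.le
      linarith
    · rw [e₁, e₂, mul_mul_mul_comm, p1, zero_mul]
    · rw [e₁, e₃, mul_mul_mul_comm, p2, zero_mul]
    · rw [e₂, e₃, mul_mul_mul_comm, p3, zero_mul]
    · intro z1 z2 z3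
      left
      rw [e₁] at z1
      rw [e₂] at z2
      rw [e₃] at z3
      have w1 := (mul_eq_zero.mp z1).resolve_right hi
      have w2 := (mul_eq_zero.mp z2).resolve_right hi
      have w3 := (mul_eq_zero.mp z3).resolve_right hi
      have w : (f i).1 v = 1 := by unfold rest at w3; linarith
      rw [es, hg, hr, w]
      simp [hpos.ne']

/-- The detector of a star: a map that records where the particle closest to `v` is relative to
the second closest one. Its height is `rad v` of the closest particle divided by `second v`, and its
arc tells whether that particle lies on the edge to `u₁`, on the edge to `u₂` or on another edge. The
lower node is the value at configurations with a particle at `v`, and the upper node at those where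
no particle is strictly closest to `v`. -/
def starMap (n : ℕ) {v u₁ u₂ : V} (h₁ : u₁ ≠ v) (h₂ : u₂ ≠ v) (h₁₂ : u₁ ≠ u₂) :
    C(UConf n (realization Γ), Theta) where
  toFun := Quot.lift (fun f => ⟨(1 - gapSum v (fun _ => 1) f.1 / second v f.1,
      gapSum v (fun x => x.1 u₁) f.1, gapSum v (fun x => x.1 u₂) f.1,
      gapSum v (rest v u₁ u₂) f.1), star_mem h₁ h₂ h₁₂ f.1 f.2⟩) (by
    rintro f g ⟨τ, h⟩
    apply Subtype.ext
    simp only [h, gapSum_comp, second_comp])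
  continuous_toFun := by
    refine continuous_quot_lift _ ?_
    have hval : Continuous fun f : Conf n (realization Γ) => f.1 := continuous_subtype_val
    refine Continuous.subtype_mk (Continuous.prodMk ?_ (Continuous.prodMk ?_
      (Continuous.prodMk ?_ ?_))) _
    · exact continuous_const.sub (((continuous_gapSum v continuous_const).comp hval).div
        ((continuous_second v).comp hval) fun f => (second_pos v f.1 f.2).ne')
    · exact (continuous_gapSum v (continuous_coord u₁)).comp hval
    · exact (continuous_gapSum v (continuous_coord u₂)).comp hval
    · exact (continuous_gapSum v (continuous_rest v u₁ u₂)).comp hval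

variable {v u₁ u₂ : V} (h₁ : u₁ ≠ v) (h₂ : u₂ ≠ v) (h₁₂ : u₁ ≠ u₂) {ι : Type}
  (e : ι ≃ Fin n) (f : ι → realization Γ) (hf : Function.Injective f)

theorem second_eq_one (i : ι) (hr : ∀ k, k ≠ i → rad v (f k) = 1) :
    second v (f ∘ e.symm) = 1 := by
  refine le_antisymm (second_le_one _ _) (le_second _ _ _ le_rfl fun j k hjk => ?_)
  by_cases h : e.symm j = i
  · have : e.symm k ≠ i := fun h' => hjk (e.symm.injective (h.trans h'.symm))
    exact le_max_of_le_right (hr _ this).ge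
  · exact le_max_of_le_left (hr _ h).ge

/-- The detector when at most one particle is near `v`. -/
theorem starMap_single (i : ι) (hr : ∀ k, k ≠ i → rad v (f k) = 1) :
    (starMap n h₁ h₂ h₁₂ (uconf e f hf)).ht = rad v (f i) ∧
    (starMap n h₁ h₂ h₁₂ (uconf e f hf)).leg₁ = (f i).1 u₁ * (1 - rad v (f i)) ∧
    (starMap n h₁ h₂ h₁₂ (uconf e f hf)).leg₂ = (f i).1 u₂ * (1 - rad v (f i)) ∧
    (starMap n h₁ h₂ h₁₂ (uconf e f hf)).leg₃ = rest v u₁ u₂ (f i) * (1 - rad v (f i)) := by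
  have hs := second_eq_one (v := v) e f i hr
  have hg : ∀ k, gap v (f ∘ e.symm) k = 1 - rad v (f (e.symm k)) := fun k => by
    rw [gap, hs]
    exact max_eq_right (sub_nonneg.mpr (rad_le_one v _))
  have hsum := gapSum_single v (f ∘ e.symm) (i := e i) fun k hk => by
    rw [hg, hr _ (fun h => hk (by rw [← h, Equiv.apply_symm_apply])), sub_self]
  simp only [hg, Function.comp, Equiv.symm_apply_apply] at hsum
  refine ⟨?_, hsum fun x => x.1 u₁, hsum fun x => x.1 u₂, hsum (rest v u₁ u₂)⟩
  change 1 - gapSum v (fun _ => 1) (f ∘ e.symm) / second v (f ∘ e.symm) = _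
  rw [hs]
  have := hsum fun _ => 1
  simp only [Function.comp_def] at this ⊢
  rw [this]; ring

/-- The detector takes the upper node as its value when no particle is near `v`. -/
theorem starMap_const (hr : ∀ k, rad v (f k) = 1) :
    (starMap n h₁ h₂ h₁₂ (uconf e f hf)) = ⟨(1, 0, 0, 0), by simp⟩ := by
  have hs : second v (f ∘ e.symm) = 1 :=
    le_antisymm (second_le_one _ _) (le_second _ _ _ le_rfl fun j k _ =>
      le_max_of_le_left (hr _).ge)
  have hg : ∀ k, gap v (f ∘ e.symm) k = 0 := fun k => by
    rw [gap, hs]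
    exact max_eq_left (by simp [hr])
  have h0 : ∀ φ, gapSum v φ (f ∘ e.symm) = 0 := fun φ => Finset.sum_eq_zero fun i _ => by
    rw [hg i, mul_zero]
  apply Subtype.ext
  change (1 - gapSum v (fun _ => 1) (f ∘ e.symm) / second v (f ∘ e.symm),
    gapSum v (fun x => x.1 u₁) (f ∘ e.symm), gapSum v (fun x => x.1 u₂) (f ∘ e.symm),
      gapSum v (rest v u₁ u₂) (f ∘ e.symm)) = _
  simp only [h0]
  simp

end StarDetector

/-! ### Exchanging two particles at a vertex of degree three -/

/-- Truncation to `[0, 1]`. -/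
def trunc (y : ℝ) : ℝ := max 0 (min 1 y)

theorem continuous_trunc : Continuous trunc := by unfold trunc; fun_prop
theorem trunc_nonneg (y : ℝ) : 0 ≤ trunc y := le_max_left _ _
theorem trunc_le_one (y : ℝ) : trunc y ≤ 1 := max_le zero_le_one (min_le_left _ _)
theorem trunc_of_nonpos {y : ℝ} (h : y ≤ 0) : trunc y = 0 :=
  max_eq_left ((min_le_right _ _).trans h)
theorem trunc_of_one_le {y : ℝ} (h : 1 ≤ y) : trunc y = 1 := by
  rw [trunc, min_eq_left h, max_eq_right zero_le_one]
theorem trunc_of_mem {y : ℝ} (h₀ : 0 ≤ y) (h₁ : y ≤ 1) : trunc y = y := by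
  rw [trunc, min_eq_right h₁, max_eq_right h₀]

/-- A vertex with three distinct neighbours. -/
structure Star {V : Type} (Γ : SimpleGraph V) where
  /-- The centre of the star. -/
  v : V
  /-- The first neighbour. -/
  u₁ : V
  /-- The second neighbour. -/
  u₂ : V
  /-- The third neighbour. -/
  u₃ : V
  adj₁ : Γ.Adj v u₁
  adj₂ : Γ.Adj v u₂
  adj₃ : Γ.Adj v u₃
  ne₁₂ : u₁ ≠ u₂
  ne₁₃ : u₁ ≠ u₃
  ne₂₃ : u₂ ≠ u₃

namespace Star

variable {V : Type} [DecidableEq V] {Γ : SimpleGraph V} (S : Star Γ)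

/-- The point of `ℝ^V` with coordinate `wᵢ / 3` at `uᵢ` and the remaining weight at the centre. With
a single nonzero `wᵢ ∈ [0, 1]` it lies on the edge to `uᵢ`, at truncated distance `wᵢ` from the
centre. -/
def pt (w₁ w₂ w₃ : ℝ) : V → ℝ := fun x => (1 - (w₁ + w₂ + w₃) / 3) * basisVec S.v x +
  w₁ / 3 * basisVec S.u₁ x + w₂ / 3 * basisVec S.u₂ x + w₃ / 3 * basisVec S.u₃ x

theorem pt_v (w₁ w₂ w₃ : ℝ) : S.pt w₁ w₂ w₃ S.v = 1 - (w₁ + w₂ + w₃) / 3 := by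
  simp [pt, basisVec, S.adj₁.ne, S.adj₂.ne, S.adj₃.ne]

theorem pt_u₁ (w₁ w₂ w₃ : ℝ) : S.pt w₁ w₂ w₃ S.u₁ = w₁ / 3 := by
  simp [pt, basisVec, S.adj₁.ne', S.ne₁₂, S.ne₁₃]

theorem pt_u₂ (w₁ w₂ w₃ : ℝ) : S.pt w₁ w₂ w₃ S.u₂ = w₂ / 3 := by
  simp [pt, basisVec, S.adj₂.ne', S.ne₁₂.symm, S.ne₂₃]

theorem pt_u₃ (w₁ w₂ w₃ : ℝ) : S.pt w₁ w₂ w₃ S.u₃ = w₃ / 3 := by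
  simp [pt, basisVec, S.adj₃.ne', S.ne₁₃.symm, S.ne₂₃.symm]

theorem pt_mem₁ {w : ℝ} (h₀ : 0 ≤ w) (h₁ : w ≤ 1) : S.pt w 0 0 ∈ realization Γ := by
  convert edgePt_mem S.adj₁ (t := w / 3) (by linarith) (by linarith) using 1
  funext x; simp [pt, edgePt]

theorem pt_mem₂ {w : ℝ} (h₀ : 0 ≤ w) (h₁ : w ≤ 1) : S.pt 0 w 0 ∈ realization Γ := by
  convert edgePt_mem S.adj₂ (t := w / 3) (by linarith) (by linarith) using 1
  funext x; simp [pt, edgePt]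

theorem pt_mem₃ {w : ℝ} (h₀ : 0 ≤ w) (h₁ : w ≤ 1) : S.pt 0 0 w ∈ realization Γ := by
  convert edgePt_mem S.adj₃ (t := w / 3) (by linarith) (by linarith) using 1
  funext x; simp [pt, edgePt]

/-- The first particle at time `s ∈ [0, 6]`: it moves from edge 1 to edge 3 for `s ∈ [0, 2]`, waits,
and moves from edge 3 to edge 2 for `s ∈ [4, 6]`. -/
def ptA (s : ℝ) : V → ℝ :=
  S.pt (trunc (1 - s)) (trunc (s - 5)) (min (trunc (s - 1)) (trunc (5 - s)))

/-- The second particle at time `s ∈ [0, 6]`: it moves from edge 2 to edge 1 for `s ∈ [2, 4]`. -/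
def ptB (s : ℝ) : V → ℝ := S.pt (trunc (s - 3)) (trunc (3 - s)) 0

theorem ptA_first {s : ℝ} (h : s ≤ 1) : S.ptA s = S.pt (trunc (1 - s)) 0 0 := by
  rw [ptA, trunc_of_nonpos (y := s - 5) (by linarith),
    trunc_of_nonpos (y := s - 1) (by linarith), min_eq_left (trunc_nonneg _)]

theorem ptA_mid {s : ℝ} (h : 1 ≤ s) (h' : s ≤ 5) :
    S.ptA s = S.pt 0 0 (min (trunc (s - 1)) (trunc (5 - s))) := by
  rw [ptA, trunc_of_nonpos (y := s - 5) (by linarith),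
    trunc_of_nonpos (y := 1 - s) (by linarith)]

theorem ptA_last {s : ℝ} (h : 5 ≤ s) : S.ptA s = S.pt 0 (trunc (s - 5)) 0 := by
  rw [ptA, trunc_of_nonpos (y := 1 - s) (by linarith),
    trunc_of_nonpos (y := 5 - s) (by linarith), min_eq_right (trunc_nonneg _)]

theorem ptB_first {s : ℝ} (h : s ≤ 3) : S.ptB s = S.pt 0 (trunc (3 - s)) 0 := by
  rw [ptB, trunc_of_nonpos (y := s - 3) (by linarith)]

theorem ptB_last {s : ℝ} (h : 3 ≤ s) : S.ptB s = S.pt (trunc (s - 3)) 0 0 := by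
  rw [ptB, trunc_of_nonpos (y := 3 - s) (by linarith)]

theorem ptA_mem (s : ℝ) : S.ptA s ∈ realization Γ := by
  rcases le_total s 1 with h | h
  · rw [S.ptA_first h]; exact S.pt_mem₁ (trunc_nonneg _) (trunc_le_one _)
  rcases le_total s 5 with h' | h'
  · rw [S.ptA_mid h h']
    exact S.pt_mem₃ (le_min (trunc_nonneg _) (trunc_nonneg _))
      ((min_le_left _ _).trans (trunc_le_one _))
  · rw [S.ptA_last h']; exact S.pt_mem₂ (trunc_nonneg _) (trunc_le_one _)

theorem ptB_mem (s : ℝ) : S.ptB s ∈ realization Γ := by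
  rcases le_total s 3 with h | h
  · rw [S.ptB_first h]; exact S.pt_mem₂ (trunc_nonneg _) (trunc_le_one _)
  · rw [S.ptB_last h]; exact S.pt_mem₁ (trunc_nonneg _) (trunc_le_one _)

theorem ptA_v (s : ℝ) : 2 / 3 ≤ S.ptA s S.v := by
  rcases le_total s 1 with h | h
  · rw [S.ptA_first h, pt_v]; linarith [trunc_le_one (1 - s)]
  rcases le_total s 5 with h' | h'
  · rw [S.ptA_mid h h', pt_v]
    linarith [(min_le_left (trunc (s - 1)) (trunc (5 - s))).trans (trunc_le_one _)]
  · rw [S.ptA_last h', pt_v]; linarith [trunc_le_one (s - 5)]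

theorem ptB_v (s : ℝ) : 2 / 3 ≤ S.ptB s S.v := by
  rcases le_total s 3 with h | h
  · rw [S.ptB_first h, pt_v]; linarith [trunc_le_one (3 - s)]
  · rw [S.ptB_last h, pt_v]; linarith [trunc_le_one (s - 3)]

theorem ptA_ne_ptB (s : ℝ) : S.ptA s ≠ S.ptB s := by
  intro h
  rcases le_total s 2 with h2 | h2
  · have e := congrFun h S.u₂
    rw [S.ptB_first (by linarith), pt_u₂, trunc_of_one_le (y := 3 - s) (by linarith),
      ptA, pt_u₂, trunc_of_nonpos (by linarith)] at e
    norm_num at e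
  rcases le_total s 4 with h4 | h4
  · have e := congrFun h S.u₃
    rw [ptB, pt_u₃, ptA, pt_u₃, trunc_of_one_le (y := 5 - s) (by linarith),
      trunc_of_one_le (y := s - 1) (by linarith)] at e
    norm_num at e
  · have e := congrFun h S.u₁
    rw [S.ptB_last (by linarith), pt_u₁, trunc_of_one_le (y := s - 3) (by linarith),
      ptA, pt_u₁, trunc_of_nonpos (by linarith)] at e
    norm_num at e

theorem continuous_pt {Y : Type*} [TopologicalSpace Y] {w₁ w₂ w₃ : Y → ℝ} (h₁ : Continuous w₁)
    (h₂ : Continuous w₂) (h₃ : Continuous w₃) :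
    Continuous fun y => S.pt (w₁ y) (w₂ y) (w₃ y) := by
  refine continuous_pi fun x => ?_
  unfold pt
  fun_prop

/-- The motion in which two particles near the centre of the star exchange their positions on the
edges 1 and 2, making use of the edge 3. -/
def traj (t : I) : Fin 2 → realization Γ :=
  ![⟨S.ptA (6 * t), S.ptA_mem _⟩, ⟨S.ptB (6 * t), S.ptB_mem _⟩]

theorem continuous_traj : Continuous S.traj := by
  have hc := continuous_trunc
  refine continuous_pi fun k => ?_
  fin_cases k
  · refine Continuous.subtype_mk (S.continuous_pt ?_ ?_ ?_) _
    · exact hc.comp (by fun_prop)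
    · exact hc.comp (by fun_prop)
    · exact (hc.comp (by fun_prop)).min (hc.comp (by fun_prop))
  · refine Continuous.subtype_mk (S.continuous_pt ?_ ?_ ?_) _
    · exact hc.comp (by fun_prop)
    · exact hc.comp (by fun_prop)
    · exact continuous_const

theorem traj_injective (t : I) : Function.Injective (S.traj t) := by
  have h : S.traj t 0 ≠ S.traj t 1 := fun h => S.ptA_ne_ptB _ (congrArg Subtype.val h)
  intro i k hik
  fin_cases i <;> fin_cases k
  · rfl
  · exact absurd hik h
  · exact absurd hik.symm h
  · rfl

theorem traj_closed : Set.range (S.traj 1) = Set.range (S.traj 0) := by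
  have h0 : S.traj 1 0 = S.traj 0 1 := Subtype.ext <| by
    change S.ptA (6 * (1 : ℝ)) = S.ptB (6 * (0 : ℝ))
    rw [S.ptA_last (by norm_num), S.ptB_first (by norm_num), trunc_of_one_le (by norm_num),
      trunc_of_one_le (by norm_num)]
  have h1 : S.traj 1 1 = S.traj 0 0 := Subtype.ext <| by
    change S.ptB (6 * (1 : ℝ)) = S.ptA (6 * (0 : ℝ))
    rw [S.ptA_first (by norm_num), S.ptB_last (by norm_num), trunc_of_one_le (by norm_num),
      trunc_of_one_le (by norm_num)]
  ext x
  simp only [Set.mem_range, Fin.exists_fin_two, h0, h1]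
  exact or_comm

theorem traj_v (t : I) (k : Fin 2) : 2 / 3 ≤ (S.traj t k).1 S.v := by
  fin_cases k
  · exact S.ptA_v _
  · exact S.ptB_v _

theorem rad_pt {x : realization Γ} {w₁ w₂ w₃ : ℝ} (h : x.1 = S.pt w₁ w₂ w₃)
    (hw : w₁ + w₂ + w₃ ≤ 1) : rad S.v x = w₁ + w₂ + w₃ := by
  rw [rad, h, pt_v, min_eq_right] <;> linarith

theorem rad_traj_zero (k : Fin 2) : rad S.v (S.traj 0 k) = 1 := by
  fin_cases k
  · have h : (S.traj 0 0).1 = S.pt 1 0 0 := by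
      change S.ptA (6 * (0 : ℝ)) = _
      rw [S.ptA_first (by norm_num), trunc_of_one_le (by norm_num)]
    exact (S.rad_pt h (by norm_num)).trans (by norm_num)
  · have h : (S.traj 0 1).1 = S.pt 0 1 0 := by
      change S.ptB (6 * (0 : ℝ)) = _
      rw [S.ptB_first (by norm_num), trunc_of_one_le (by norm_num)]
    exact (S.rad_pt h (by norm_num)).trans (by norm_num)

theorem rest_pt {x : realization Γ} {w₁ w₂ w₃ : ℝ} (h : x.1 = S.pt w₁ w₂ w₃) :
    rest S.v S.u₁ S.u₂ x = w₃ / 3 := by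
  rw [rest, h, pt_v, pt_u₁, pt_u₂]; ring

/-- The detector `Θ`-map of the star. -/
def det (n : ℕ) : C(UConf n (realization Γ), Theta) :=
  starMap n S.adj₁.ne' S.adj₂.ne' S.ne₁₂

theorem det_single {n : ℕ} {ι : Type} (e : ι ≃ Fin n) (f : ι → realization Γ)
    (hf : Function.Injective f) (i : ι) (hr : ∀ k, k ≠ i → rad S.v (f k) = 1) {w₁ w₂ w₃ : ℝ}
    (h : (f i).1 = S.pt w₁ w₂ w₃) (hw : w₁ + w₂ + w₃ ≤ 1) :
    (S.det n (uconf e f hf)).ht = w₁ + w₂ + w₃ ∧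
    (w₁ = 0 → (S.det n (uconf e f hf)).leg₁ = 0) ∧
    (w₂ = 0 → (S.det n (uconf e f hf)).leg₂ = 0) ∧
    (w₃ = 0 → (S.det n (uconf e f hf)).leg₃ = 0) := by
  obtain ⟨a, b, c, d⟩ := starMap_single S.adj₁.ne' S.adj₂.ne' S.ne₁₂ e f hf i hr
  rw [S.rad_pt h hw] at *
  rw [h] at b c
  rw [S.rest_pt h] at d
  rw [pt_u₁] at b
  rw [pt_u₂] at c
  refine ⟨a, fun h0 => ?_, fun h0 => ?_, fun h0 => ?_⟩
  · exact b.trans (by rw [h0]; ring)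
  · exact c.trans (by rw [h0]; ring)
  · exact d.trans (by rw [h0]; ring)

/-- A loop of configurations in which two particles perform `Star.traj` and all the others stay away
from the centre is sent by the detector to the commutator loop of
`Theta.commutator_infinite_order`. -/
theorem det_infinite_order {n : ℕ} {ι : Type} (e : ι ≃ Fin n) (f : I → ι → realization Γ)
    (hf : ∀ t, Function.Injective (f t)) {x : UConf n (realization Γ)} (γ : Path x x)
    (hγ : ∀ t, γ t = uconf e (f t) (hf t)) (iA iB : ι)
    (hA : ∀ t, f t iA = S.traj t 0) (hB : ∀ t, f t iB = S.traj t 1)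
    (hr : ∀ t k, k ≠ iA → k ≠ iB → rad S.v (f t k) = 1) (k : ℤ)
    (hk : FundamentalGroup.map (S.det n) x (loopClass γ) ^ k = 1) : k = 0 := by
  have hA' : ∀ t, (f t iA).1 = S.ptA (6 * t) := fun t => by rw [hA]; rfl
  have hB' : ∀ t, (f t iB).1 = S.ptB (6 * t) := fun t => by rw [hB]; rfl
  have rB : ∀ t : I, (6 * (t : ℝ) ≤ 2 ∨ 4 ≤ 6 * (t : ℝ)) →
      ∀ k, k ≠ iA → rad S.v (f t k) = 1 := by
    intro t ht k hkA
    by_cases hkB : k = iB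
    · subst hkB
      rcases ht with ht | ht
      · have := (hB' t).trans (S.ptB_first (by linarith))
        rw [trunc_of_one_le (by linarith)] at this
        rw [S.rad_pt this (by norm_num)]; norm_num
      · have := (hB' t).trans (S.ptB_last (by linarith))
        rw [trunc_of_one_le (by linarith)] at this
        rw [S.rad_pt this (by norm_num)]; norm_num
    · exact hr t k hkA hkB
  have rA : ∀ t : I, 2 ≤ 6 * (t : ℝ) → 6 * (t : ℝ) ≤ 4 →
      ∀ k, k ≠ iB → rad S.v (f t k) = 1 := by
    intro t ht ht' k hkB
    by_cases hkA : k = iA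
    · subst hkA
      have := (hA' t).trans (S.ptA_mid (by linarith) (by linarith))
      rw [trunc_of_one_le (by linarith), trunc_of_one_le (by linarith), min_self] at this
      rw [S.rad_pt this (by norm_num)]; norm_num
    · exact hr t k hkA hkB
  rw [map_loopClass] at hk
  refine Theta.commutator_infinite_order (γ.map (S.det n).continuous) ?_ ?_ ?_ ?_ ?_ ?_ k hk <;>
    intro t <;>
    rw [show (γ.map (S.det n).continuous) t = S.det n (uconf e (f t) (hf t)) from
      congrArg (S.det n) (hγ t)]
  · intro a
    have h := (hA' t).trans (S.ptA_first a)
    rw [trunc_of_mem (by linarith) (by linarith [t.2.1])] at h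
    obtain ⟨c, c1, c2, c3⟩ := S.det_single e (f t) (hf t) iA (rB t (by left; linarith)) h
      (by linarith [t.2.1])
    exact ⟨by rw [c]; ring, c2 rfl, c3 rfl⟩
  · intro a b
    have h := (hA' t).trans (S.ptA_mid a (by linarith))
    rw [trunc_of_mem (y := 6 * (t : ℝ) - 1) (by linarith) (by linarith),
      trunc_of_one_le (by linarith), min_eq_left (by linarith)] at h
    obtain ⟨c, c1, c2, c3⟩ := S.det_single e (f t) (hf t) iA (rB t (by left; linarith)) h
      (by linarith)
    exact ⟨by rw [c]; ring, c1 rfl, c2 rfl⟩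
  · intro a b
    have h := (hB' t).trans (S.ptB_first b)
    rw [trunc_of_mem (by linarith) (by linarith)] at h
    obtain ⟨c, c1, c2, c3⟩ := S.det_single e (f t) (hf t) iB (rA t a (by linarith)) h
      (by linarith)
    exact ⟨by rw [c]; ring, c1 rfl, c3 rfl⟩
  · intro a b
    have h := (hB' t).trans (S.ptB_last a)
    rw [trunc_of_mem (by linarith) (by linarith)] at h
    obtain ⟨c, c1, c2, c3⟩ := S.det_single e (f t) (hf t) iB (rA t (by linarith) b) h
      (by linarith)
    exact ⟨by rw [c]; ring, c2 rfl, c3 rfl⟩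
  · intro a b
    have h := (hA' t).trans (S.ptA_mid (by linarith) b)
    rw [trunc_of_mem (y := 5 - 6 * (t : ℝ)) (by linarith) (by linarith),
      trunc_of_one_le (by linarith), min_eq_right (by linarith)] at h
    obtain ⟨c, c1, c2, c3⟩ := S.det_single e (f t) (hf t) iA (rB t (by right; linarith)) h
      (by linarith)
    exact ⟨by rw [c]; ring, c1 rfl, c2 rfl⟩
  · intro a
    have h := (hA' t).trans (S.ptA_last a)
    rw [trunc_of_mem (by linarith) (by linarith [t.2.2])] at h
    obtain ⟨c, c1, c2, c3⟩ := S.det_single e (f t) (hf t) iA (rB t (by right; linarith)) h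
      (by linarith [t.2.2])
    exact ⟨by rw [c]; ring, c1 rfl, c3 rfl⟩

end Star

/-! ### Rotating particles along a cycle -/

/-- A cycle in `Γ`, as a closed walk `x 0, x 1, …, x len = x 0` with distinct vertices
`x 0, …, x (len - 1)`. The values `x k` for `k > len` are irrelevant to the cycle. -/
structure CycleWalk {V : Type} (Γ : SimpleGraph V) where
  /-- The length of the cycle. -/
  len : ℕ
  /-- The vertices, in cyclic order. -/
  x : ℕ → V
  three_le : 3 ≤ len
  closed : x len = x 0
  adj : ∀ k, k < len → Γ.Adj (x k) (x (k + 1))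
  inj : ∀ i k, i < len → k < len → x i = x k → i = k

/-- A cycle subgraph is not a tree, because it has no leaves; hence it contains a cycle. -/
theorem exists_cycleWalk {V : Type} [Fintype V] {Γ : SimpleGraph V} (H : Γ.Subgraph)
    (hH : IsCycleSubgraph H) : ∃ R : CycleWalk Γ, ∀ k, R.x k ∈ H.verts := by
  obtain ⟨⟨⟨a, b⟩, hab⟩, hconn, hdeg⟩ := hH
  have hab : H.Adj a b := hab
  have hnt : Nontrivial H.verts :=
    ⟨⟨a, H.edge_vert hab⟩, ⟨b, H.edge_vert hab.symm⟩, fun h => hab.ne (congrArg Subtype.val h)⟩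
  have hcyc : ¬ H.coe.IsAcyclic := by
    intro hac
    have htree : H.coe.IsTree := ⟨hconn.coe, hac⟩
    obtain ⟨w, hw⟩ := htree.exists_vert_degree_one_of_nontrivial
    have h2 := hdeg w.1 w.2
    rw [SimpleGraph.Subgraph.coe_degree] at hw
    rw [← SimpleGraph.Subgraph.finset_card_neighborSet_eq_degree,
      ← Set.ncard_eq_toFinset_card'] at hw
    omega
  simp only [SimpleGraph.IsAcyclic, not_forall, not_not] at hcyc
  obtain ⟨w, c, hc⟩ := hcyc
  refine ⟨⟨c.length, fun k => (c.getVert k).1, hc.three_le_length, ?_, ?_, ?_⟩, ?_⟩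
  · simp
  · intro k hk
    exact H.adj_sub (c.adj_getVert_succ hk)
  · intro i k hi hk h
    exact hc.getVert_injOn' (by simp; omega) (by simp; omega) (Subtype.ext h)
  · intro k
    exact (c.getVert k).2

namespace CycleWalk

variable {V : Type} [DecidableEq V] {Γ : SimpleGraph V} (R : CycleWalk Γ)

/-- The piecewise linear parametrization of the cycle by `s ∈ [0, 1]`, with `x k` at `s = k / len`. It
is written as a sum of hat functions in order that continuity be plain. -/
def curve (s : ℝ) : V → ℝ := fun w =>
  ∑ k ∈ Finset.range (R.len + 1), max 0 (1 - |R.len * s - k|) * basisVec (R.x k) w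

theorem continuous_curve : Continuous R.curve :=
  continuous_pi fun w => by unfold curve; fun_prop

theorem len_pos : (0 : ℝ) < R.len := by
  have := R.three_le
  exact_mod_cast (by omega : 0 < R.len)

theorem curve_eq {s : ℝ} {k : ℕ} (hk : k < R.len) (h₀ : k ≤ R.len * s) (h₁ : R.len * s ≤ k + 1) :
    R.curve s = edgePt (R.x k) (R.x (k + 1)) (R.len * s - k) := by
  funext w
  have hsub : ({k, k + 1} : Finset ℕ) ⊆ Finset.range (R.len + 1) := by
    intro j; simp only [Finset.mem_insert, Finset.mem_singleton, Finset.mem_range]; omega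
  rw [curve, ← Finset.sum_subset hsub, Finset.sum_pair (by omega)]
  · rw [abs_of_nonneg (by linarith), abs_of_nonpos (by push_cast; linarith),
      max_eq_right (by linarith), max_eq_right (by push_cast; linarith)]
    push_cast
    simp only [edgePt]; ring
  · intro j _ hj
    simp only [Finset.mem_insert, Finset.mem_singleton, not_or] at hj
    rw [max_eq_left, zero_mul]
    rcases Nat.lt_or_gt_of_ne hj.1 with h | h
    · have : (j : ℝ) + 1 ≤ k := by exact_mod_cast h
      rw [abs_of_nonneg (by linarith)]; linarith
    · have : (k : ℝ) + 2 ≤ j := by exact_mod_cast (by omega : k + 2 ≤ j)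
      rw [abs_of_nonpos (by linarith)]; linarith

theorem exists_index {s : ℝ} (h₀ : 0 ≤ s) (h₁ : s < 1) :
    ∃ k, k < R.len ∧ (k : ℝ) ≤ R.len * s ∧ R.len * s < k + 1 := by
  have hl := R.len_pos
  refine ⟨⌊R.len * s⌋₊, ?_, Nat.floor_le (by positivity), Nat.lt_floor_add_one _⟩
  rw [Nat.floor_lt (by positivity)]
  nlinarith

theorem curve_zero_eq_one : R.curve 0 = R.curve 1 := by
  have h3 := R.three_le
  have hl := R.len_pos
  have h0 := R.curve_eq (s := 0) (k := 0) (by omega) (by simp) (by simp)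
  have h1 := R.curve_eq (s := 1) (k := R.len - 1) (by omega)
    (by rw [Nat.cast_sub (by omega)]; simp) (by rw [Nat.cast_sub (by omega)]; simp)
  rw [h0, h1, Nat.sub_add_cancel (by omega), Nat.cast_sub (by omega)]
  rw [show (R.len : ℝ) * 0 - (0 : ℕ) = 0 by simp,
    show (R.len : ℝ) * 1 - (R.len - (1 : ℕ)) = 1 by simp, edgePt_zero, edgePt_one, R.closed]

theorem curve_mem {s : ℝ} (h₀ : 0 ≤ s) (h₁ : s < 1) : R.curve s ∈ realization Γ := by
  obtain ⟨k, hk, a, b⟩ := R.exists_index h₀ h₁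
  rw [R.curve_eq hk a b.le]
  exact edgePt_mem (R.adj k hk) (by linarith) (by linarith)

theorem curve_support {s : ℝ} {w : V} (h : R.curve s w ≠ 0) : ∃ k, w = R.x k := by
  obtain ⟨k, _, hk⟩ := Finset.exists_ne_zero_of_sum_ne_zero h
  refine ⟨k, ?_⟩
  by_contra hne
  simp [basisVec, hne] at hk

theorem succ_eq {i k : ℕ} (hi : i < R.len) (hk : k < R.len) (h : R.x i = R.x (k + 1)) :
    i = k + 1 ∨ (k + 1 = R.len ∧ i = 0) := by
  rcases Nat.lt_or_ge (k + 1) R.len with h' | h'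
  · exact Or.inl (R.inj _ _ hi h' h)
  · have h3 := R.three_le
    have : k + 1 = R.len := by omega
    rw [this, R.closed] at h
    exact Or.inr ⟨this, R.inj _ _ hi (by omega) h⟩

theorem edgePt_ne_zero {a b w : V} {t : ℝ} (h : edgePt a b t w ≠ 0) : w = a ∨ w = b := by
  by_contra hcon
  rw [not_or] at hcon
  exact h (by simp [edgePt, basisVec, hcon])

theorem curve_injOn {s s' : ℝ} (h₀ : 0 ≤ s) (h₁ : s < 1) (h₀' : 0 ≤ s') (h₁' : s' < 1)
    (h : R.curve s = R.curve s') : s = s' := by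
  obtain ⟨k, hk, a, b⟩ := R.exists_index h₀ h₁
  obtain ⟨k', hk', a', b'⟩ := R.exists_index h₀' h₁'
  have h3 := R.three_le
  rw [R.curve_eq hk a b.le, R.curve_eq hk' a' b'.le] at h
  have v1 : edgePt (R.x k) (R.x (k + 1)) (R.len * s - k) (R.x k) = 1 - (R.len * s - k) := by
    simp [edgePt, basisVec, (R.adj k hk).ne]
  have v2 : edgePt (R.x k') (R.x (k' + 1)) (R.len * s' - k') (R.x k') =
      1 - (R.len * s' - k') := by
    simp [edgePt, basisVec, (R.adj k' hk').ne]
  have c1 : R.x k = R.x k' ∨ R.x k = R.x (k' + 1) := by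
    refine edgePt_ne_zero (t := R.len * s' - k') ?_
    rw [← h, v1]; linarith
  have c2 : R.x k' = R.x k ∨ R.x k' = R.x (k + 1) := by
    refine edgePt_ne_zero (t := R.len * s - k) ?_
    rw [h, v2]; linarith
  have hkk : k = k' := by
    rcases c1 with c1 | c1
    · exact R.inj _ _ hk hk' c1
    rcases c2 with c2 | c2
    · exact (R.inj _ _ hk' hk c2).symm
    have := R.succ_eq hk hk' c1
    have := R.succ_eq hk' hk c2
    omega
  subst hkk
  rw [h, v2] at v1
  have := R.len_pos
  have : (R.len : ℝ) * s = R.len * s' := by linarith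
  exact mul_left_cancel₀ R.len_pos.ne' this

theorem ne₀₁ : R.x 0 ≠ R.x 1 := by
  have := R.three_le
  exact (R.adj 0 (by omega)).ne

theorem edgeAngle_curve {s : ℝ} (h₀ : 0 ≤ s) (h₁ : s < 1) :
    edgeAngle (R.x 0) (R.x 1) ⟨R.curve s, R.curve_mem h₀ h₁⟩ =
      Circle.exp (2 * pi * min 1 (R.len * s)) := by
  obtain ⟨k, hk, a, b⟩ := R.exists_index h₀ h₁
  have h3 := R.three_le
  have hc := R.curve_eq hk a b.le
  rcases Nat.eq_zero_or_pos k with rfl | hpos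
  · have e0 : R.curve s (R.x 0) = 1 - R.len * s := by
      rw [hc]; simp [edgePt, basisVec, R.ne₀₁]
    have e1 : R.curve s (R.x 1) = R.len * s := by
      rw [hc]; simp [edgePt, basisVec, R.ne₀₁.symm]
    rw [edgeAngle_of_add _ (show R.curve s _ + R.curve s _ = 1 by rw [e0, e1]; ring)]
    change Circle.exp (2 * pi * R.curve s (R.x 1)) = _
    rw [e1, min_eq_right]
    simpa using b.le
  · have hk1 : (1 : ℝ) ≤ k := by exact_mod_cast hpos
    rw [min_eq_left (by linarith), edgeAngle, if_pos]
    · simp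
    · change R.curve s (R.x 0) * R.curve s (R.x 1) = 0
      by_contra hne
      rw [mul_eq_zero, not_or, hc] at hne
      have c0 : R.x 0 = R.x (k + 1) := by
        refine (edgePt_ne_zero hne.1).resolve_left fun h => ?_
        have := R.inj _ _ (by omega) hk h
        omega
      have c1 := edgePt_ne_zero hne.2
      have := R.succ_eq (by omega) hk c0
      rcases c1 with c1 | c1
      · have := R.inj _ _ (by omega) hk c1
        omega
      · have := R.succ_eq (by omega) hk c1
        omega

/-- The parametrization of the cycle by the real line, with period `1`. -/
def loopPt (t : ℝ) : realization Γ :=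
  ⟨R.curve (Int.fract t), R.curve_mem (Int.fract_nonneg t) (Int.fract_lt_one t)⟩

theorem continuous_loopPt : Continuous R.loopPt :=
  Continuous.subtype_mk
    (ContinuousOn.comp_fract'' R.continuous_curve.continuousOn R.curve_zero_eq_one) _

theorem loopPt_eq {t t' : ℝ} (h : R.loopPt t = R.loopPt t') : Int.fract t = Int.fract t' :=
  R.curve_injOn (Int.fract_nonneg t) (Int.fract_lt_one t) (Int.fract_nonneg t')
    (Int.fract_lt_one t') (congrArg Subtype.val h)

/-- A continuous real lift of `edgeAngle` along the cycle, in units of `2π`, where the distinguished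
edge is the one from `x 0` to `x 1`. -/
def lift (t : ℝ) : ℝ := t + (min 1 (R.len * Int.fract t) - Int.fract t)

theorem continuous_lift : Continuous R.lift := by
  have h3 : (1 : ℝ) ≤ R.len := by
    have := R.three_le
    exact_mod_cast (by omega : 1 ≤ R.len)
  refine continuous_id.add
    (ContinuousOn.comp_fract'' (f := fun s : ℝ => min 1 (R.len * s) - s) ?_ ?_)
  · fun_prop
  · simp [h3]

theorem lift_add_one (t : ℝ) : R.lift (t + 1) = R.lift t + 1 := by
  simp only [lift, Int.fract_add_one]; ring

theorem exp_lift (t : ℝ) :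
    Circle.exp (2 * pi * R.lift t) = edgeAngle (R.x 0) (R.x 1) (R.loopPt t) := by
  rw [loopPt, edgeAngle_curve _ (Int.fract_nonneg t) (Int.fract_lt_one t)]
  refine Circle.exp_eq_exp.mpr ⟨⌊t⌋, ?_⟩
  have := Int.floor_add_fract t
  rw [lift, show t + (min 1 (R.len * Int.fract t) - Int.fract t) =
    min 1 (R.len * Int.fract t) + ⌊t⌋ by linarith]
  ring

/-- The motion of `m` equally spaced particles once around the cycle. -/
def traj (m : ℕ) (t : I) (l : Fin m) : realization Γ := R.loopPt (t + (l : ℝ) / m)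

theorem continuous_traj (m : ℕ) : Continuous (R.traj m) :=
  continuous_pi fun l => R.continuous_loopPt.comp (by fun_prop)

theorem traj_injective (m : ℕ) (t : I) : Function.Injective (R.traj m t) := by
  intro l l' h
  obtain ⟨z, hz⟩ := Int.fract_eq_fract.mp (R.loopPt_eq h)
  have hm : (0 : ℝ) < m := by exact_mod_cast l.pos
  have e : ((l : ℤ) : ℝ) - ((l' : ℤ) : ℝ) = (z * m : ℤ) := by
    push_cast
    field_simp at hz
    linarith
  have e' : (l : ℤ) - l' = z * m := by exact_mod_cast e
  have h1 := l.2
  have h2 := l'.2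
  have : z = 0 := by
    by_contra hz0
    rcases Int.lt_or_gt_of_ne hz0 with h | h <;> nlinarith
  rw [this] at e'
  exact Fin.ext (by omega)

theorem traj_closed (m : ℕ) : Set.range (R.traj m 1) = Set.range (R.traj m 0) := by
  congr 1
  funext l
  apply Subtype.ext
  simp only [traj, loopPt]
  rw [show ((1 : I) : ℝ) + (l : ℝ) / m = ((0 : I) : ℝ) + (l : ℝ) / m + 1 by simp [add_comm],
    Int.fract_add_one]

theorem traj_support (m : ℕ) (t : I) (l : Fin m) {w : V} (h : (R.traj m t l).1 w ≠ 0) :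
    ∃ k, w = R.x k := R.curve_support h

/-- The detector of the cycle; its winding number counts the passages of particles through the
first edge. -/
def det (n : ℕ) : C(UConf n (realization Γ), Circle) := edgeWinding n (R.x 0) (R.x 1) R.ne₀₁

/-- A loop of configurations in which `m ≠ 0` particles go once around the cycle and no other particle
meets its first edge has winding number `m` under the detector. -/
theorem det_infinite_order {n m : ℕ} (hm : m ≠ 0) {ι : Type} [Fintype ι] (e : ι ≃ Fin n)
    (f : I → ι → realization Γ) (hf : ∀ t, Function.Injective (f t))
    {x : UConf n (realization Γ)} (γ : Path x x) (hγ : ∀ t, γ t = uconf e (f t) (hf t))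
    (j : Fin m → ι) (hj : Function.Injective j) (hA : ∀ t l, f t (j l) = R.traj m t l)
    (hr : ∀ t i, i ∉ Set.range j → edgeAngle (R.x 0) (R.x 1) (f t i) = 1) (k : ℤ)
    (hk : FundamentalGroup.map (R.det n) x (loopClass γ) ^ k = 1) : k = 0 := by
  rw [map_loopClass] at hk
  let h : C(I, ℝ) := ⟨fun t => ∑ l : Fin m, 2 * pi * R.lift (t + (l : ℝ) / m),
    continuous_finsetSum _ fun l _ => continuous_const.mul (R.continuous_lift.comp (by fun_prop))⟩
  refine circle_detects (γ.map (R.det n).continuous) (ContinuousMap.id _) h ?_ ?_ k hk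
  · intro t
    change _ = R.det n (γ t)
    rw [hγ, det, edgeWinding_uconf]
    rw [← Fintype.prod_of_injective j hj (fun l => edgeAngle (R.x 0) (R.x 1) (f t (j l))) _
      (hr t) (fun _ => rfl)]
    simp only [hA, traj, ← exp_lift]
    change Circle.exp (∑ l : Fin m, 2 * pi * R.lift (t + (l : ℝ) / m)) = _
    generalize (Finset.univ : Finset (Fin m)) = s
    induction s using Finset.induction_on with
    | empty => simp
    | insert a s ha ih => rw [Finset.sum_insert ha, Finset.prod_insert ha, Circle.exp_add, ih]
  · have e1 : h 1 = h 0 + m * (2 * pi) := by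
      change ∑ l : Fin m, 2 * pi * R.lift (((1 : I) : ℝ) + (l : ℝ) / m) =
        (∑ l : Fin m, 2 * pi * R.lift (((0 : I) : ℝ) + (l : ℝ) / m)) + m * (2 * pi)
      have : ∀ l : Fin m, 2 * pi * R.lift (((1 : I) : ℝ) + (l : ℝ) / m) =
          2 * pi * R.lift (((0 : I) : ℝ) + (l : ℝ) / m) + 2 * pi := by
        intro l
        rw [show ((1 : I) : ℝ) + (l : ℝ) / m = ((0 : I) : ℝ) + (l : ℝ) / m + 1 by
          simp [add_comm], lift_add_one]
        ring
      simp only [this, Finset.sum_add_distrib]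
      simp
    rw [e1]
    have : (0 : ℝ) < m := by exact_mod_cast Nat.pos_of_ne_zero hm
    have := Real.pi_pos
    have : 0 < (m : ℝ) * (2 * pi) := by positivity
    linarith

end CycleWalk

/-! ### The torus of a family of disjoint cycles and stars -/

theorem loopClass_eq_one_of_const {Y : Type*} [TopologicalSpace Y] {y : Y} (γ : Path y y)
    (h : ∀ t, γ t = y) : loopClass γ = 1 := by
  have : γ = Path.refl y := by ext t; exact h t
  rw [this]
  rfl

/-- Disjoint cycles and stars in `Γ`, with a distribution of particles over them: `mc i > 0` particles
on the `i`-th cycle, two at each star, and `mp` particles at rest on an edge `{a, b}`. Particles are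
parked there only if there are no cycles, since otherwise the parking edge might meet one. -/
structure Pattern {V : Type} (Γ : SimpleGraph V) (p q : ℕ) where
  /-- The vertex sets of the cycles. -/
  W : Fin p → Set V
  /-- The cycles. -/
  R : Fin p → CycleWalk Γ
  mem : ∀ i k, (R i).x k ∈ W i
  disj : ∀ i i', i ≠ i' → Disjoint (W i) (W i')
  /-- The stars. -/
  S : Fin q → Star Γ
  ne : ∀ j j', j ≠ j' → (S j).v ≠ (S j').v
  notMem : ∀ j i, (S j).v ∉ W i
  /-- One end of the edge on which particles are parked. -/
  a : V
  /-- The other end of that edge. -/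
  b : V
  adj : Γ.Adj a b
  /-- The number of particles on each cycle. -/
  mc : Fin p → ℕ
  mc_ne : ∀ i, mc i ≠ 0
  /-- The number of parked particles. -/
  mp : ℕ
  mp_eq : p ≠ 0 → mp = 0

namespace Pattern

variable {V : Type} [DecidableEq V] {Γ : SimpleGraph V} {p q : ℕ} (P : Pattern Γ p q)

/-- The blocks of particles: the cycles, the stars, and the parked particles. -/
abbrev Block (p q : ℕ) : Type := (Fin p ⊕ Fin q) ⊕ Unit

/-- Number of particles in each block. -/
def size : Block p q → ℕ
  | .inl (.inl i) => P.mc i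
  | .inl (.inr _) => 2
  | .inr _ => P.mp

theorem park_mem (k : Fin P.mp) :
    edgePt P.a P.b (2 / 5 + (k : ℝ) / (5 * P.mp)) ∈ realization Γ ∧
      2 / 5 ≤ 2 / 5 + (k : ℝ) / (5 * P.mp) ∧ 2 / 5 + (k : ℝ) / (5 * P.mp) ≤ 3 / 5 := by
  have hk : (k : ℝ) ≤ P.mp := by exact_mod_cast k.2.le
  have hm : (0 : ℝ) < P.mp := by exact_mod_cast k.pos
  have h0 : 0 ≤ (k : ℝ) / (5 * P.mp) := by positivity
  have h1 : (k : ℝ) / (5 * P.mp) ≤ 1 / 5 := by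
    rw [div_le_iff₀ (by positivity)]; linarith
  exact ⟨edgePt_mem P.adj (by linarith) (by linarith), by linarith, by linarith⟩

/-- The trajectories of the particles of each block. The parked particles occupy the middle fifth of
their edge, so as to stay away from the stars. -/
def traj : (c : Block p q) → I → Fin (P.size c) → realization Γ
  | .inl (.inl i) => (P.R i).traj (P.mc i)
  | .inl (.inr j) => (P.S j).traj
  | .inr _ => fun _ k => ⟨edgePt P.a P.b (2 / 5 + (k : ℝ) / (5 * P.mp)), (P.park_mem k).1⟩

/-- The region of `|Γ|` reserved for a block: the cycle itself, the neighbourhood of the centre of the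
star in which the coordinate of the centre is at least `2 / 3`, or the complement of all vertex
neighbourhoods. The last region is empty when there are cycles. -/
def Region : Block p q → (V → ℝ) → Prop
  | .inl (.inl i), x => ∀ w, x w ≠ 0 → w ∈ P.W i
  | .inl (.inr j), x => 2 / 3 ≤ x (P.S j).v
  | .inr _, x => p = 0 ∧ ∀ w, x w ≤ 3 / 5

theorem traj_region : ∀ (c : Block p q) (t : I) (k : Fin (P.size c)),
    P.Region c (P.traj c t k).1
  | .inl (.inl i), t, k => by
    intro w hw
    obtain ⟨l, rfl⟩ := (P.R i).traj_support _ t k hw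
    exact P.mem i l
  | .inl (.inr j), t, k => (P.S j).traj_v t k
  | .inr _, t, k => by
    have hk : 0 < P.mp := Fin.pos k
    refine ⟨?_, fun w => ?_⟩
    · by_contra hp
      have := P.mp_eq hp
      omega
    · obtain ⟨-, h1, h2⟩ := P.park_mem k
      have hne := P.adj.ne
      change edgePt P.a P.b (2 / 5 + (k : ℝ) / (5 * P.mp)) w ≤ 3 / 5
      generalize 2 / 5 + (k : ℝ) / (5 * P.mp) = t at h1 h2
      simp only [edgePt, basisVec]
      split_ifs with ha hb hb
      · exact absurd (ha.symm.trans hb) hne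
      all_goals linarith

theorem exists_ne_zero {x : V → ℝ} (hx : x ∈ realization Γ) : ∃ w, x w ≠ 0 := by
  obtain ⟨a, b, h, t, h0, h1, rfl⟩ := exists_edgePt hx
  by_contra hcon
  push Not at hcon
  have ha := hcon a
  have hb := hcon b
  simp only [edgePt, basisVec, if_neg h.ne, if_neg h.ne', if_true] at ha hb
  linarith

theorem not_region_cycle_cycle {i i' : Fin p} (h : i ≠ i') {x : V → ℝ} (hx : x ∈ realization Γ)
    (h₁ : ∀ w, x w ≠ 0 → w ∈ P.W i) (h₂ : ∀ w, x w ≠ 0 → w ∈ P.W i') : False := by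
  obtain ⟨w, hw⟩ := exists_ne_zero hx
  exact Set.disjoint_left.mp (P.disj i i' h) (h₁ w hw) (h₂ w hw)

theorem not_region_cycle_star {i : Fin p} {j : Fin q} {x : V → ℝ}
    (h₁ : ∀ w, x w ≠ 0 → w ∈ P.W i) (h₂ : 2 / 3 ≤ x (P.S j).v) : False :=
  P.notMem j i (h₁ _ (by linarith))

theorem region_star_le {j j' : Fin q} (h : j ≠ j') {x : V → ℝ} (hx : x ∈ realization Γ)
    (h₁ : 2 / 3 ≤ x (P.S j).v) : x (P.S j').v ≤ 1 / 3 := by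
  by_contra hcon
  have := coord_add_eq_one hx (P.ne j j' h) (by linarith) (by linarith)
  linarith

theorem region_disjoint {c c' : Block p q} (h : c ≠ c') {x : V → ℝ} (hx : x ∈ realization Γ)
    (h₁ : P.Region c x) (h₂ : P.Region c' x) : False := by
  rcases c with (i | j) | ⟨⟩ <;> rcases c' with (i' | j') | ⟨⟩
  · exact P.not_region_cycle_cycle (fun e => h (by rw [e])) hx h₁ h₂
  · exact P.not_region_cycle_star h₁ h₂
  · have := i.pos; have := h₂.1; omega
  · exact P.not_region_cycle_star h₂ h₁
  · have := P.region_star_le (fun e => h (by rw [e])) hx h₁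
    have h₂ : 2 / 3 ≤ x (P.S j').v := h₂
    linarith
  · have h₁ : 2 / 3 ≤ x (P.S j).v := h₁
    have := h₂.2 (P.S j).v
    linarith
  · have := i'.pos; have := h₁.1; omega
  · have h₂ : 2 / 3 ≤ x (P.S j').v := h₂
    have := h₁.2 (P.S j').v
    linarith
  · exact h rfl

/-- The motion of all the blocks: rotation along the cycles, exchange of two particles at the stars,
and rest on the parking edge. -/
def motion : Motion (realization Γ) (Block p q) P.size where
  traj := P.traj
  continuous_traj
    | .inl (.inl i) => (P.R i).continuous_traj _
    | .inl (.inr j) => (P.S j).continuous_traj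
    | .inr _ => continuous_const
  inj
    | .inl (.inl i), t => (P.R i).traj_injective _ t
    | .inl (.inr j), t => (P.S j).traj_injective t
    | .inr _, t => by
      intro k k' h
      have e := congrFun (congrArg Subtype.val h) P.b
      change edgePt P.a P.b (2 / 5 + ((k : ℕ) : ℝ) / (5 * P.mp)) P.b =
        edgePt P.a P.b (2 / 5 + ((k' : ℕ) : ℝ) / (5 * P.mp)) P.b at e
      simp only [edgePt, basisVec, if_neg P.adj.ne', if_true] at e
      have hm : (0 : ℝ) < P.mp := by exact_mod_cast (Fin.pos k : 0 < P.mp)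
      have e' : ((k : ℕ) : ℝ) / (5 * P.mp) = ((k' : ℕ) : ℝ) / (5 * P.mp) := by linarith
      rw [div_left_inj' (by positivity)] at e'
      exact Fin.ext (by exact_mod_cast e')
  disj c c' t t' k k' h e :=
    P.region_disjoint h (P.traj c t k).2 (P.traj_region c t k) (e ▸ P.traj_region c' t' k')
  closed
    | .inl (.inl i) => (P.R i).traj_closed _
    | .inl (.inr j) => (P.S j).traj_closed
    | .inr _ => rfl

theorem pos_region (τ : Block p q → I) (i : Σ c, Fin (P.size c)) :
    P.Region i.1 (P.motion.pos τ i).1 := P.traj_region _ _ _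

theorem pos_cycle (τ : Block p q → I) (i : Fin p) (l : Fin (P.mc i)) :
    P.motion.pos τ ⟨.inl (.inl i), l⟩ = (P.R i).traj (P.mc i) (τ (.inl (.inl i))) l := rfl

theorem pos_star (τ : Block p q → I) (j : Fin q) (l : Fin 2) :
    P.motion.pos τ ⟨.inl (.inr j), l⟩ = (P.S j).traj (τ (.inl (.inr j))) l := rfl

theorem edgeAngle_eq_one {i : Fin p} {c : Block p q} (h : c ≠ .inl (.inl i))
    (x : realization Γ) (hx : P.Region c x.1) :
    edgeAngle ((P.R i).x 0) ((P.R i).x 1) x = 1 := by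
  refine if_pos ?_
  rcases c with (i' | j) | ⟨⟩
  · by_contra hne
    rw [mul_eq_zero, not_or] at hne
    exact Set.disjoint_left.mp (P.disj i i' fun e => h (by rw [e])) (P.mem i 0) (hx _ hne.1)
  · have hx : 2 / 3 ≤ x.1 (P.S j).v := hx
    refine coord_mul_eq_zero x.2 (v := (P.S j).v) (by linarith) (P.R i).ne₀₁ ?_ ?_
    · exact fun e => P.notMem j i (e ▸ P.mem i 0)
    · exact fun e => P.notMem j i (e ▸ P.mem i 1)
  · have := i.pos; have := hx.1; omega

theorem rad_eq_one {j : Fin q} {c : Block p q} (h : c ≠ .inl (.inr j))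
    (x : realization Γ) (hx : P.Region c x.1) : rad (P.S j).v x = 1 := by
  have key : x.1 (P.S j).v ≤ 2 / 3 := by
    rcases c with (i | j') | ⟨⟩
    · have : x.1 (P.S j).v = 0 := by
        by_contra hne
        exact P.notMem j i (hx _ hne)
      linarith
    · have := P.region_star_le (fun e => h (by rw [e])) x.2 hx
      linarith
    · have := hx.2 (P.S j).v
      linarith
  exact min_eq_left (by linarith)

variable {n : ℕ} (e : (Σ c, Fin (P.size c)) ≃ Fin n)

theorem cycle_kills (i : Fin p) {c : Block p q} (hc : c ≠ .inl (.inl i)) :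
    FundamentalGroup.map ((P.R i).det n) _ (loopClass (P.motion.loop e c)) = 1 := by
  rw [map_loopClass]
  refine loopClass_eq_one_of_const _ fun t => ?_
  change (P.R i).det n (P.motion.loop e c t) = (P.R i).det n (P.motion.torus e 0)
  rw [Motion.loop_apply, Motion.torus, CycleWalk.det]
  rw [edgeWinding_uconf, edgeWinding_uconf]
  refine Finset.prod_congr rfl fun k _ => ?_
  by_cases hk : k.1 = .inl (.inl i)
  · congr 1
    have : k.1 ≠ c := fun h => hc (h.symm.trans hk)
    simp [Motion.pos, Motion.only_of_ne this]
  · rw [P.edgeAngle_eq_one hk _ (P.pos_region _ k), P.edgeAngle_eq_one hk _ (P.pos_region _ k)]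

theorem cycle_detects (i : Fin p) (k : ℤ)
    (hk : FundamentalGroup.map ((P.R i).det n) _
      (loopClass (P.motion.loop e (.inl (.inl i)))) ^ k = 1) : k = 0 := by
  refine (P.R i).det_infinite_order (P.mc_ne i) e
    (fun t => P.motion.pos (Motion.only (.inl (.inl i)) t))
    (fun t => P.motion.pos_injective _) _ (fun t => P.motion.loop_apply e _ t)
    (fun l => ⟨.inl (.inl i), l⟩) ?_ ?_ ?_ k hk
  · intro l l' h
    exact eq_of_heq (Sigma.mk.inj h).2
  · intro t l
    exact (P.pos_cycle _ i l).trans (by rw [Motion.only_self])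
  · intro t l hl
    refine P.edgeAngle_eq_one (c := l.1) ?_ _ (P.pos_region _ l)
    rintro h
    obtain ⟨c, l⟩ := l
    subst h
    exact hl ⟨l, rfl⟩

theorem star_kills (j : Fin q) {c : Block p q} (hc : c ≠ .inl (.inr j)) :
    FundamentalGroup.map ((P.S j).det n) _ (loopClass (P.motion.loop e c)) = 1 := by
  have hrad : ∀ (t : I) (k : Σ c, Fin (P.size c)),
      rad (P.S j).v (P.motion.pos (Motion.only c t) k) = 1 := by
    intro t k
    by_cases hk : k.1 = .inl (.inr j)
    · have hne : k.1 ≠ c := fun h => hc (h.symm.trans hk)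
      obtain ⟨b, k⟩ := k
      change b = _ at hk
      subst hk
      rw [P.pos_star _ j k, Motion.only_of_ne hne]
      exact (P.S j).rad_traj_zero k
    · exact P.rad_eq_one hk _ (P.pos_region _ k)
  rw [map_loopClass]
  refine loopClass_eq_one_of_const _ fun t => ?_
  have h0 := (P.motion.loop e c).source
  have key : ∀ t, (P.S j).det n (P.motion.loop e c t) = (⟨(1, 0, 0, 0), by simp⟩ : Theta) :=
    fun t => starMap_const _ _ _ e _ (P.motion.pos_injective _) (hrad t)
  change (P.S j).det n (P.motion.loop e c t) = (P.S j).det n (P.motion.torus e 0)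
  rw [key, ← h0, key]

theorem star_detects (j : Fin q) (k : ℤ)
    (hk : FundamentalGroup.map ((P.S j).det n) _
      (loopClass (P.motion.loop e (.inl (.inr j)))) ^ k = 1) : k = 0 := by
  refine (P.S j).det_infinite_order e
    (fun t => P.motion.pos (Motion.only (.inl (.inr j)) t))
    (fun t => P.motion.pos_injective _) _ (fun t => P.motion.loop_apply e _ t)
    ⟨.inl (.inr j), (0 : Fin 2)⟩ ⟨.inl (.inr j), (1 : Fin 2)⟩ ?_ ?_ ?_ k hk
  · intro t
    exact (P.pos_star _ j _).trans (by rw [Motion.only_self])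
  · intro t
    exact (P.pos_star _ j _).trans (by rw [Motion.only_self])
  · intro t l hA hB
    refine P.rad_eq_one (c := l.1) ?_ _ (P.pos_region _ l)
    rintro h
    obtain ⟨c, l⟩ := l
    change c = _ at h
    subst h
    change Fin 2 at l
    fin_cases l
    · exact hA rfl
    · exact hB rfl

/-- The loops of the cycles and of the stars span a free abelian subgroup. -/
theorem exists_subgroup : ∃ H : Subgroup (FundamentalGroup (UConf n (realization Γ))
    (P.motion.torus e 0)), Nonempty (H ≃* Multiplicative (Fin p ⊕ Fin q → ℤ)) := by
  refine exists_free_abelian_of_detectors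
    (fun c : Fin p ⊕ Fin q => loopClass (P.motion.loop e (.inl c))) ?_ ?_
  · intro c c' h
    exact P.motion.loop_commute e _ _ fun h' => h (Sum.inl_injective h')
  · rintro (i | j)
    · refine ⟨_, inferInstance, FundamentalGroup.map ((P.R i).det n) _, fun c hc => ?_,
        P.cycle_detects e i⟩
      exact P.cycle_kills e i fun h => hc (Sum.inl_injective h)
    · refine ⟨_, inferInstance, FundamentalGroup.map ((P.S j).det n) _, fun c hc => ?_,
        P.star_detects e j⟩
      exact P.star_kills e j fun h => hc (Sum.inl_injective h)

end Pattern

/-- A distribution of `n` particles: if there are cycles, the surplus particles go to the first one,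
and otherwise they are parked. -/
theorem exists_sizes (n p q : ℕ) (h : p + 2 * q ≤ n) :
    ∃ (mc : Fin p → ℕ) (mp : ℕ), (∀ i, mc i ≠ 0) ∧ (p ≠ 0 → mp = 0) ∧
      ∑ i, mc i + 2 * q + mp = n := by
  rcases p with _ | p
  · exact ⟨fun _ => 1, n - 2 * q, by simp, by simp, by simp; omega⟩
  · refine ⟨Fin.cons (n - p - 2 * q) fun _ => 1, 0, ?_, by simp, ?_⟩
    · intro i
      refine Fin.cases ?_ (fun k => ?_) i
      · simp; omega
      · simp
    · rw [Fin.sum_univ_succ]; simp; omega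

theorem exists_star {V : Type} [Fintype V] {Γ : SimpleGraph V} (v : V)
    (h : 3 ≤ (Γ.neighborSet v).ncard) : ∃ S : Star Γ, S.v = v := by
  obtain ⟨a, b, c, ha, hb, hc, hab, hac, hbc⟩ := (Set.two_lt_ncard_iff (Set.toFinite _)).mp h
  exact ⟨⟨v, a, b, c, ha, hb, hc, hab, hac, hbc⟩, rfl⟩

/-! ### The free abelian subgroup -/

/-- If `Γ` contains `p` pairwise vertex-disjoint cycle subgraphs and `q`
further pairwise distinct vertices of degree at least 3, disjoint from all the cycles, and
`p + 2q ≤ n`, then `B_n(Γ)` contains a subgroup isomorphic to `ℤ^(p+q)`. -/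
theorem braidN_contains_free_abelian
    (V : Type) [Fintype V] [DecidableEq V] (Γ : SimpleGraph V)
    (hconn : Γ.Connected) (hedge : Γ.edgeSet.Nonempty)
    (n p q : ℕ) (hpq : p + 2 * q ≤ n)
    (C : Fin p → Γ.Subgraph) (hC : ∀ i, IsCycleSubgraph (C i))
    (hCdisj : ∀ i j, i ≠ j → Disjoint (C i).verts (C j).verts)
    (v : Fin q → V) (hv : Function.Injective v)
    (hdeg : ∀ j, 3 ≤ (Γ.neighborSet (v j)).ncard)
    (hvC : ∀ j i, v j ∉ (C i).verts)
    (x : UConf n ↥(realization Γ)) :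
    ∃ H : Subgroup (FundamentalGroup (UConf n ↥(realization Γ)) x),
      Nonempty (H ≃* Multiplicative (Fin (p + q) → ℤ)) := by
  choose R hR using fun i => exists_cycleWalk (C i) (hC i)
  choose S hS using fun j => exists_star (v j) (hdeg j)
  obtain ⟨a, b, hab⟩ : ∃ a b, Γ.Adj a b := by
    obtain ⟨⟨a, b⟩, h⟩ := hedge
    exact ⟨a, b, h⟩
  obtain ⟨mc, mp, hmc, hmp, hsum⟩ := exists_sizes n p q hpq
  let P : Pattern Γ p q :=
    { W := fun i => (C i).verts
      R := R
      mem := hR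
      disj := hCdisj
      S := S
      ne := fun j j' h => by rw [hS, hS]; exact hv.ne h
      notMem := fun j i => by rw [hS]; exact hvC j i
      a := a
      b := b
      adj := hab
      mc := mc
      mc_ne := hmc
      mp := mp
      mp_eq := hmp }
  have hcard : Fintype.card (Σ c, Fin (P.size c)) = n := by
    simp only [Fintype.card_sigma, Fintype.card_fin]
    rw [Fintype.sum_sum_type, Fintype.sum_sum_type]
    change ∑ i, mc i + ∑ _ : Fin q, 2 + ∑ _ : Unit, mp = n
    simp
    omega
  let e := Fintype.equivFinOfCardEq hcard
  obtain ⟨H, ⟨φ⟩⟩ := P.exists_subgroup e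
  -- `UC_n(|Γ|)` is path connected, so the basepoint is irrelevant
  have := realization_pathConnected hconn hedge
  obtain ⟨γ⟩ := uconf_joined (P.motion.torus e 0) x
  let Ψ := FundamentalGroup.fundamentalGroupMulEquivOfPath γ
  let ψ : Multiplicative (Fin p ⊕ Fin q → ℤ) ≃* Multiplicative (Fin (p + q) → ℤ) :=
    AddEquiv.toMultiplicative
      (LinearEquiv.funCongrLeft ℤ ℤ (finSumFinEquiv (m := p) (n := q)).symm).toAddEquiv
  exact ⟨H.map Ψ.toMonoidHom,
    ⟨(H.equivMapOfInjective Ψ.toMonoidHom Ψ.injective).symm.trans (φ.trans ψ)⟩⟩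

end GraphBraid
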